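/- arXiv:2105.07034 — 4 statements merged into one kernel-verified Lean document; each statement's English description precedes it below -/
import Mathlib

section
/- Let G be a fixed graph of degeneracy d ∈ ℕ and let ω = ω(n) be any function tending to infinity as n → ∞. Then there exists a strategy S for the semi-random graph process such that, with t = t(n) = ⌊n^{(d−1)/d} ω(n)⌋, the probability that H_t contains a subgraph isomorphic to G tends to 1 as n → ∞. -/
open Filter
open scoped ENNReal

namespace SemiRandomGraph

/-- One round of the semi-random graph process: the pair (square vertex, circle vertex),
i.e. the random vertex `u_t` together with the player's reply `v_t`. -/
abbrev Step (n : ℕ) := Fin n × Fin n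

/-- A strategy of the player: given the history of the process so far (most recent round
first) and the current random vertex `u_t`, a probability distribution for the reply `v_t`. -/
def Strategy (n : ℕ) := List (Step n) → Fin n → PMF (Fin n)

/-- The distribution of the history (most recent round first) after `t` rounds of the
semi-random graph process played with strategy `S`. -/
noncomputable def historyPMF {n : ℕ} (hn : 0 < n) (S : Strategy n) :
    ℕ → PMF (List (Step n))
  | 0 => PMF.pure []
  | t + 1 =>
      (historyPMF hn S t).bind fun h =>
        (@PMF.uniformOfFintype (Fin n) _ (Fin.pos_iff_nonempty.mp hn)).bind fun u =>
          (S h u).map fun v => (u, v) :: h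

/-- The multigraph built by the process (recorded by its history `h`) contains a subgraph
isomorphic to the simple graph `G`. -/
def ContainsCopy {V : Type*} {n : ℕ} (G : SimpleGraph V) (h : List (Step n)) : Prop :=
  ∃ φ : V ↪ Fin n, ∀ a b : V, G.Adj a b → ((φ a, φ b) ∈ h ∨ (φ b, φ a) ∈ h)

/-- The probability that after `t` rounds the multigraph `H_t` built with strategy `S`
contains a copy of `G`. -/
noncomputable def probContains {V : Type*} (n : ℕ) (S : Strategy n) (G : SimpleGraph V)
    (t : ℕ) : ℝ≥0∞ :=
  if hn : 0 < n then (historyPMF hn S t).toOuterMeasure {h | ContainsCopy G h} else 0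

/-- `G` is `d`-degenerate: every (induced, hence every) subgraph has a vertex of degree
at most `d`. -/
def Degen {V : Type*} (G : SimpleGraph V) [DecidableRel G.Adj] (d : ℕ) : Prop :=
  ∀ s : Finset V, s.Nonempty → ∃ v ∈ s, (s.filter fun u => G.Adj v u).card ≤ d

/-- `G` has degeneracy exactly `d`. -/
def DegeneracyEq {V : Type*} (G : SimpleGraph V) [DecidableRel G.Adj] (d : ℕ) : Prop :=
  Degen G d ∧ ∀ d' : ℕ, Degen G d' → d ≤ d'

/-! ### Value function of the finite-horizon game -/

open Classical in
/-- Minimal probability of missing the goal `P` after exactly `t` further rounds. -/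
noncomputable def failP {n : ℕ} (P : List (Step n) → Prop) : ℕ → List (Step n) → ℝ
  | 0, h => if P h then 0 else 1
  | t + 1, h => (∑ u : Fin n, ⨅ v : Fin n, failP P t ((u, v) :: h)) / n

/-- Goals preserved by further rounds. -/
def MonoGoal {n : ℕ} (P : List (Step n) → Prop) : Prop :=
  ∀ h s, P h → P (s :: h)

section value
variable {n : ℕ} {P Q : List (Step n) → Prop}

lemma failP_nonneg (t : ℕ) (h : List (Step n)) : 0 ≤ failP P t h := by
  induction t generalizing h with
  | zero => unfold failP; split_ifs <;> norm_num
  | succ t ih =>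
    unfold failP
    exact div_nonneg (Finset.sum_nonneg fun u _ => Real.iInf_nonneg fun v => ih _) (by positivity)

lemma iInf_failP_le (t : ℕ) (h : List (Step n)) (u v : Fin n) :
    ⨅ v : Fin n, failP P t ((u, v) :: h) ≤ failP P t ((u, v) :: h) :=
  ciInf_le (Set.finite_range _).bddBelow v

/-- Bounding the value by exhibiting replies. -/
lemma failP_succ_le (t : ℕ) (h : List (Step n)) (v : Fin n → Fin n) (c : Fin n → ℝ)
    (hc : ∀ u, failP P t ((u, v u) :: h) ≤ c u) :
    failP P (t + 1) h ≤ (∑ u, c u) / n := by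
  rw [failP]
  gcongr with u
  exact (iInf_failP_le t h u (v u)).trans (hc u)

lemma failP_succ_le_const (hn : 0 < n) (t : ℕ) (h : List (Step n)) (c : ℝ)
    (hc : ∀ s, failP P t (s :: h) ≤ c) :
    failP P (t + 1) h ≤ c := by
  have := failP_succ_le t h (fun u => u) (fun _ => c) (fun u => hc _)
  have hn' : (n : ℝ) ≠ 0 := by positivity
  simpa [hn'] using this

lemma failP_le_one (hn : 0 < n) (t : ℕ) (h : List (Step n)) : failP P t h ≤ 1 := by
  induction t generalizing h with
  | zero => unfold failP; split_ifs <;> norm_num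
  | succ t ih => exact failP_succ_le_const hn t h 1 (fun s => ih _)

lemma failP_eq_zero (hn : 0 < n) (hP : MonoGoal P) (t : ℕ) (h : List (Step n)) (hh : P h) :
    failP P t h = 0 := by
  refine le_antisymm ?_ (failP_nonneg _ _)
  induction t generalizing h with
  | zero => simp [failP, hh]
  | succ t ih => exact failP_succ_le_const hn t h 0 (fun s => ih _ (hP _ _ hh))

lemma failP_comp (hn : 0 < n) (t₁ t₂ : ℕ) (ε : ℝ) (hε : 0 ≤ ε)
    (hQ : ∀ h, Q h → failP P t₂ h ≤ ε) (h : List (Step n)) :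
    failP P (t₁ + t₂) h ≤ failP Q t₁ h + ε := by
  induction t₁ generalizing h with
  | zero =>
    rw [zero_add]
    by_cases hq : Q h
    · simpa [failP, hq] using hQ h hq
    · have := failP_le_one (P := P) hn t₂ h
      simp only [failP, hq, if_false]; linarith
  | succ t ih =>
    have hne : Nonempty (Fin n) := ⟨⟨0, hn⟩⟩
    choose v hv using fun u : Fin n =>
      exists_eq_ciInf_of_finite (f := fun v : Fin n => failP Q t ((u, v) :: h))
    have h1 := failP_succ_le (P := P) (t + t₂) h v
      (fun u => (⨅ v : Fin n, failP Q t ((u, v) :: h)) + ε)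
      (fun u => by
        have := ih ((u, v u) :: h)
        rw [← hv u]; exact this)
    have e : t + 1 + t₂ = t + t₂ + 1 := by omega
    rw [e]
    refine h1.trans (le_of_eq ?_)
    have hn' : (n : ℝ) ≠ 0 := by positivity
    rw [failP, Finset.sum_add_distrib]
    simp
    field_simp

lemma failP_anti (hn : 0 < n) (hP : MonoGoal P) {t t' : ℕ} (htt : t ≤ t') (h : List (Step n)) :
    failP P t' h ≤ failP P t h := by
  obtain ⟨r, rfl⟩ := Nat.exists_eq_add_of_le htt
  simpa using failP_comp (P := P) (Q := P) hn t r 0 le_rfl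
    (fun h hh => (failP_eq_zero hn hP r h hh).le) h

lemma failP_imp (hn : 0 < n) (hPQ : ∀ h, Q h → P h) (t : ℕ) (h : List (Step n)) :
    failP P t h ≤ failP Q t h := by
  simpa using failP_comp (P := P) (Q := Q) hn t 0 0 le_rfl
    (fun h hh => by simp [failP, hPQ h hh]) h

/-- Markov-type bound for a stage in which `r` hits are needed. -/
lemma failP_hits (hn : 0 < n) (hP : MonoGoal P) (R : ℕ → List (Step n) → Prop) (q : ℝ)
    (hR : ∀ r h, R r h → P h ∨ ∃ r', r = r' + 1 ∧ ∃ (D : Finset (Fin n)) (v : Fin n → Fin n),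
      (n : ℝ) ≤ D.card * q ∧ (∀ u ∈ D, R r' ((u, v u) :: h)) ∧ ∀ u, R r ((u, v u) :: h))
    (hq : 0 ≤ q) (t r : ℕ) (h : List (Step n)) (hr : R r h) :
    t * failP P t h ≤ r * q := by
  induction t generalizing r h with
  | zero => simp; positivity
  | succ t ih =>
    rcases hR r h hr with hp | ⟨r', rfl, D, v, hD, hD1, hD2⟩
    · rw [failP_eq_zero hn hP _ _ hp]; simp; positivity
    · have hn' : (0 : ℝ) < n := by positivity
      have h1 := failP_le_one (P := P) hn (t + 1) h
      have h2 := failP_succ_le (P := P) t h v (fun u => failP P t ((u, v u) :: h)) (fun u => le_rfl)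
      have h3 : ∑ u, (t : ℝ) * failP P t ((u, v u) :: h)
          ≤ ∑ u, (((r' + 1 : ℕ) : ℝ) * q - if u ∈ D then q else 0) := by
        refine Finset.sum_le_sum fun u _ => ?_
        by_cases hu : u ∈ D
        · have := ih r' _ (hD1 u hu)
          simp only [hu, if_true]; push_cast; linarith
        · have := ih (r' + 1) _ (hD2 u)
          simp only [hu, if_false]; linarith
      rw [← Finset.mul_sum, Finset.sum_sub_distrib] at h3
      simp only [Finset.sum_const, Finset.sum_ite_mem, Finset.univ_inter, Finset.card_univ,
        Fintype.card_fin, nsmul_eq_mul] at h3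
      rw [le_div_iff₀ hn'] at h2
      have h4 : (t : ℝ) * failP P (t + 1) h * n ≤ (((r' + 1 : ℕ) : ℝ) * q - 1) * n := by
        have := mul_le_mul_of_nonneg_left h2 (Nat.cast_nonneg (α := ℝ) t)
        nlinarith
      have h5 := le_of_mul_le_mul_right h4 hn'
      push_cast at h5 ⊢
      linarith

end value

/-! ### From the value function to a strategy -/

/-- Expectation of an `ℝ≥0∞`-valued function. -/
noncomputable def ev {α : Type*} (p : PMF α) (f : α → ℝ≥0∞) : ℝ≥0∞ := ∑' a, p a * f a

lemma ev_bind {α β : Type*} (p : PMF α) (g : α → PMF β) (f : β → ℝ≥0∞) :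
    ev (p.bind g) f = ev p fun a => ev (g a) f := by
  unfold ev
  simp only [PMF.bind_apply, ← ENNReal.tsum_mul_right, ← ENNReal.tsum_mul_left]
  rw [ENNReal.tsum_comm]
  simp only [mul_assoc]

lemma ev_pure {α : Type*} (a : α) (f : α → ℝ≥0∞) : ev (PMF.pure a) f = f a := by
  unfold ev
  rw [tsum_eq_single a]
  · simp
  · intro b hb; simp [hb]

lemma ev_mono {α : Type*} (p : PMF α) {f g : α → ℝ≥0∞} (hfg : ∀ a ∈ p.support, f a ≤ g a) :
    ev p f ≤ ev p g := by
  refine ENNReal.tsum_le_tsum fun a => ?_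
  by_cases ha : p a = 0
  · simp [ha]
  · exact mul_le_mul_right (hfg a ha) _

lemma length_of_mem_support {n : ℕ} (hn : 0 < n) (S : Strategy n) (t : ℕ) (h : List (Step n))
    (hh : h ∈ (historyPMF hn S t).support) : h.length = t := by
  induction t generalizing h with
  | zero => simp [historyPMF] at hh; simp [hh]
  | succ t ih =>
    rw [historyPMF, PMF.mem_support_bind_iff] at hh
    obtain ⟨h', hh', hh⟩ := hh
    rw [PMF.mem_support_bind_iff] at hh
    obtain ⟨u, -, hh⟩ := hh
    rw [PMF.mem_support_map_iff] at hh
    obtain ⟨v, -, rfl⟩ := hh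
    simp [ih h' hh']

lemma exists_strategy {n : ℕ} (hn : 0 < n) (P : List (Step n) → Prop) (T : ℕ) :
    ∃ S : Strategy n,
      1 - ENNReal.ofReal (failP P T []) ≤ (historyPMF hn S T).toOuterMeasure {h | P h} := by
  classical
  have hne : Nonempty (Fin n) := ⟨⟨0, hn⟩⟩
  choose v hv using fun (h : List (Step n)) (u : Fin n) =>
    exists_eq_ciInf_of_finite (f := fun v : Fin n => failP P (T - (h.length + 1)) ((u, v) :: h))
  let S : Strategy n := fun h u => PMF.pure (v h u)
  refine ⟨S, ?_⟩
  have key : ∀ t, t ≤ T → ev (historyPMF hn S t) (fun h => ENNReal.ofReal (failP P (T - h.length) h))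
      ≤ ENNReal.ofReal (failP P T []) := by
    intro t
    induction t with
    | zero => intro _; simp [historyPMF, ev_pure]
    | succ t ih =>
      intro ht
      refine le_trans ?_ (ih (by omega))
      rw [historyPMF, ev_bind]
      refine ev_mono _ fun h hh => ?_
      have hl := length_of_mem_support hn S t h hh
      rw [ev_bind]
      simp only [S, PMF.pure_map, ev_pure]
      have e : T - h.length = T - (h.length + 1) + 1 := by omega
      rw [e, failP]
      simp only [List.length_cons, hv]
      unfold ev
      rw [tsum_fintype]
      simp only [PMF.uniformOfFintype_apply, Fintype.card_fin]
      rw [← Finset.mul_sum, ENNReal.ofReal_div_of_pos (by positivity),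
        ENNReal.ofReal_sum_of_nonneg (fun u _ => Real.iInf_nonneg fun v => failP_nonneg _ _),
        ENNReal.ofReal_natCast, ENNReal.div_eq_inv_mul]
  have h1 := key T le_rfl
  have h2 : ev (historyPMF hn S T) (fun h => if P h then 0 else 1)
      ≤ ENNReal.ofReal (failP P T []) := by
    refine le_trans (ev_mono _ fun h hh => ?_) h1
    have hl := length_of_mem_support hn S T h hh
    simp only [hl, Nat.sub_self, failP]
    split_ifs <;> simp
  have h3 : (historyPMF hn S T).toOuterMeasure {h | P h}
      + ev (historyPMF hn S T) (fun h => if P h then 0 else 1) = 1 := by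
    rw [PMF.toOuterMeasure_apply, ev, ← ENNReal.tsum_add, ← (historyPMF hn S T).tsum_coe]
    refine tsum_congr fun h => ?_
    by_cases hp : P h <;> simp [Set.indicator, hp]
  rw [tsub_le_iff_right, ← h3]
  gcongr

/-! ### The stages of the strategy -/

/-- `φ` embeds `G[s]` into the graph of the history `h`. -/
def EmbBy {V : Type*} {n : ℕ} (G : SimpleGraph V) (s : Finset V) (φ : V → Fin n)
    (h : List (Step n)) : Prop :=
  Set.InjOn φ s ∧ ∀ a ∈ s, ∀ b ∈ s, G.Adj a b → ((φ a, φ b) ∈ h ∨ (φ b, φ a) ∈ h)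

def Emb {V : Type*} {n : ℕ} (G : SimpleGraph V) (s : Finset V) (h : List (Step n)) : Prop :=
  ∃ φ : V → Fin n, EmbBy G s φ h

/-- At least `a` unused vertices are joined to all of `φ '' M`. -/
def Cand {V : Type*} {n : ℕ} (G : SimpleGraph V) (s : Finset V) (φ : V → Fin n)
    (M : Finset V) (a : ℕ) (h : List (Step n)) : Prop :=
  EmbBy G s φ h ∧ ∃ A : Finset (Fin n), a ≤ A.card ∧ (∀ x ∈ A, ∀ y ∈ s, φ y ≠ x) ∧
    ∀ x ∈ A, ∀ y ∈ M, (x, φ y) ∈ h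

section stages
variable {V : Type*} {n : ℕ} {G : SimpleGraph V} {s : Finset V} {φ : V → Fin n}

lemma EmbBy.cons {h : List (Step n)} (H : EmbBy G s φ h) (st : Step n) :
    EmbBy G s φ (st :: h) := by
  refine ⟨H.1, fun a ha b hb hab => ?_⟩
  rcases H.2 a ha b hb hab with h | h
  · exact Or.inl (List.mem_cons_of_mem _ h)
  · exact Or.inr (List.mem_cons_of_mem _ h)

lemma mono_emb : MonoGoal (n := n) (Emb G s) := fun _ st ⟨φ, H⟩ => ⟨φ, H.cons st⟩

lemma mono_cand (M : Finset V) (a : ℕ) : MonoGoal (Cand G s φ M a) :=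
  fun _ st ⟨H, A, hA, h1, h2⟩ => ⟨H.cons st, A, hA, h1, fun x hx y hy =>
    List.mem_cons_of_mem _ (h2 x hx y hy)⟩

lemma stage [DecidableEq V] (hn : 0 < n) (M : Finset V) (y : V) (a b : ℕ) (q : ℝ) (hq : 0 ≤ q)
    (hab : (n : ℝ) ≤ ((a : ℝ) - b) * q) (t : ℕ) (h : List (Step n)) (H : Cand G s φ M a h) :
    t * failP (Cand G s φ (insert y M) b) t h ≤ b * q := by
  obtain ⟨H, A, hA, h1, h2⟩ := H
  let R : ℕ → List (Step n) → Prop := fun r h => EmbBy G s φ h ∧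
    (∀ x ∈ A, ∀ y ∈ M, (x, φ y) ∈ h) ∧
    ∃ B ⊆ A, b ≤ B.card + r ∧ ∀ x ∈ B, (x, φ y) ∈ h
  refine failP_hits hn (mono_cand _ _) R q ?_ hq t b h
    ⟨H, h2, ∅, by simp, by simp, by simp⟩
  rintro r h ⟨H, h2, B, hBA, hB, h3⟩
  by_cases hb : b ≤ B.card
  · left
    refine ⟨H, B, hb, fun x hx => h1 x (hBA hx), fun x hx z hz => ?_⟩
    rcases Finset.mem_insert.1 hz with rfl | hz
    · exact h3 x hx
    · exact h2 x (hBA hx) z hz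
  · right
    refine ⟨r - 1, by omega, A \ B, fun _ => φ y, ?_, ?_, ?_⟩
    · refine hab.trans (mul_le_mul_of_nonneg_right ?_ hq)
      rw [Finset.card_sdiff_of_subset hBA, Nat.cast_sub (Finset.card_le_card hBA)]
      have : (a : ℝ) ≤ A.card := by exact_mod_cast hA
      have : (B.card : ℝ) ≤ b := by exact_mod_cast (by omega)
      linarith
    · intro u hu
      rw [Finset.mem_sdiff] at hu
      refine ⟨H.cons _, fun x hx z hz => List.mem_cons_of_mem _ (h2 x hx z hz), insert u B,
        Finset.insert_subset hu.1 hBA, ?_, ?_⟩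
      · rw [Finset.card_insert_of_notMem hu.2]; omega
      · intro x hx
        rcases Finset.mem_insert.1 hx with rfl | hx
        · simp
        · exact List.mem_cons_of_mem _ (h3 x hx)
    · intro u
      exact ⟨H.cons _, fun x hx z hz => List.mem_cons_of_mem _ (h2 x hx z hz), B, hBA, hB,
        fun x hx => List.mem_cons_of_mem _ (h3 x hx)⟩

lemma stages [DecidableEq V] (hn : 0 < n) (a : ℕ → ℕ) (d m : ℕ) (ε : ℝ) (hε : 0 ≤ ε)
    (hm : 0 < m)
    (ha : ∀ j < d, ∃ q : ℝ, 0 ≤ q ∧ (n : ℝ) ≤ ((a j : ℝ) - a (j + 1)) * q ∧ a (j + 1) * q ≤ m * ε)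
    (M : Finset V) (hM : M.card ≤ d) (h : List (Step n)) (H : Cand G s φ ∅ (a 0) h) :
    failP (Cand G s φ M (a M.card)) (M.card * m) h ≤ M.card * ε := by
  induction M using Finset.induction_on with
  | empty => simp [failP, H]
  | insert y M hy ih =>
    rw [Finset.card_insert_of_notMem hy] at hM ⊢
    obtain ⟨q, hq, h1, h2⟩ := ha M.card (by omega)
    have h3 := failP_comp (P := Cand G s φ (insert y M) (a (M.card + 1)))
      (Q := Cand G s φ M (a M.card)) hn (M.card * m) m ε hε (fun h' H' => by
        have := (stage (y := y) hn M _ _ q hq h1 m h' H').trans h2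
        exact le_of_mul_le_mul_left this (by positivity)) h
    have h4 := ih (by omega)
    rw [add_mul, one_mul]
    push_cast
    linarith

lemma vertex_step [DecidableEq V] [DecidableRel G.Adj] (hn : 0 < n) (a : ℕ → ℕ) (d m : ℕ)
    (ε : ℝ) (hε : 0 ≤ ε) (hm : 0 < m)
    (ha : ∀ j < d, ∃ q : ℝ, 0 ≤ q ∧ (n : ℝ) ≤ ((a j : ℝ) - a (j + 1)) * q ∧ a (j + 1) * q ≤ m * ε)
    (ha1 : ∀ j ≤ d, 1 ≤ a j) (ha0 : a 0 + s.card ≤ n) (v : V) (hv : v ∉ s)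
    (hd : (s.filter fun u => G.Adj v u).card ≤ d) (h : List (Step n)) (H : Emb G s h) :
    failP (Emb G (insert v s)) (d * m) h ≤ d * ε := by
  obtain ⟨φ, H⟩ := H
  set N := s.filter fun u => G.Adj v u with hN
  have h0 : Cand G s φ ∅ (a 0) h := by
    refine ⟨H, (s.image φ)ᶜ, ?_, ?_, by simp⟩
    · rw [Finset.card_compl, Fintype.card_fin]
      have := Finset.card_image_le (s := s) (f := φ)
      omega
    · intro x hx y hy hxy
      simp only [Finset.mem_compl, Finset.mem_image, not_exists, not_and] at hx
      exact hx y hy hxy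
  have h1 := stages hn a d m ε hε hm ha N hd h h0
  have h2 := failP_anti (P := Emb G (insert v s)) hn mono_emb (Nat.mul_le_mul_right m hd) h
  have h3 : failP (Emb G (insert v s)) (N.card * m) h
      ≤ failP (Cand G s φ N (a N.card)) (N.card * m) h := by
    refine failP_imp hn ?_ _ _
    rintro h ⟨H, A, hA, hA1, hA2⟩
    have hpos : 0 < A.card := lt_of_lt_of_le (ha1 _ hd) hA
    obtain ⟨x, hx⟩ := Finset.card_pos.1 hpos
    have hne : ∀ z ∈ s, z ≠ v := fun z hz hzv => hv (hzv ▸ hz)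
    have hup : ∀ z ∈ s, Function.update φ v x z = φ z := fun z hz =>
      Function.update_of_ne (hne z hz) _ _
    refine ⟨Function.update φ v x, ?_, ?_⟩
    · intro z hz w hw hzw
      simp only [Finset.coe_insert, Set.mem_insert_iff, Finset.mem_coe] at hz hw
      rcases hz with rfl | hz <;> rcases hw with rfl | hw
      · rfl
      · rw [hup w hw, Function.update_self] at hzw
        exact absurd hzw.symm (hA1 x hx w hw)
      · rw [hup z hz, Function.update_self] at hzw
        exact absurd hzw (hA1 x hx z hz)
      · rw [hup z hz, hup w hw] at hzw
        exact H.1 hz hw hzw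
    · intro z hz w hw hzw
      rw [Finset.mem_insert] at hz hw
      rcases hz with rfl | hz <;> rcases hw with rfl | hw
      · exact absurd hzw (G.loopless.irrefl _)
      · rw [hup w hw, Function.update_self]
        exact Or.inl (hA2 x hx w (by simp [hN, hw, hzw]))
      · rw [hup z hz, Function.update_self]
        exact Or.inr (hA2 x hx z (by simp [hN, hz, hzw.symm]))
      · rw [hup z hz, hup w hw]
        exact H.2 z hz w hw hzw
  have h4 : (N.card : ℝ) * ε ≤ d * ε := by gcongr
  linarith

lemma all_vertices [DecidableEq V] [DecidableRel G.Adj] [Fintype V] (hn : 0 < n) (a : ℕ → ℕ)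
    (d m : ℕ) (ε : ℝ) (hε : 0 ≤ ε) (hm : 0 < m) (hG : Degen G d)
    (ha : ∀ j < d, ∃ q : ℝ, 0 ≤ q ∧ (n : ℝ) ≤ ((a j : ℝ) - a (j + 1)) * q ∧ a (j + 1) * q ≤ m * ε)
    (ha1 : ∀ j ≤ d, 1 ≤ a j) (ha0 : a 0 + Fintype.card V ≤ n) (k : ℕ) (s : Finset V)
    (hk : s.card = k) :
    failP (n := n) (Emb G s) (k * (d * m)) [] ≤ k * (d * ε) := by
  induction k generalizing s with
  | zero =>
    rw [Finset.card_eq_zero] at hk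
    subst hk
    have : Emb (n := n) G ∅ [] := ⟨fun _ => ⟨0, hn⟩, by simp, by simp⟩
    simp [failP, this]
  | succ k ih =>
    obtain ⟨v, hv, hd⟩ := hG s (Finset.card_pos.1 (by omega))
    have h1 := ih (s.erase v) (by rw [Finset.card_erase_of_mem hv]; omega)
    have h2 := failP_comp (P := Emb G s) (Q := Emb G (s.erase v)) hn (k * (d * m)) (d * m) (d * ε)
      (by positivity) (fun h H => by
        have := vertex_step hn a d m ε hε hm ha ha1
          (le_trans (Nat.add_le_add_left (Finset.card_le_univ _) _) ha0) v
          (Finset.notMem_erase v s)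
          (le_trans (Finset.card_le_card (Finset.filter_subset_filter _
            (Finset.erase_subset v s))) hd) h H
        rwa [Finset.insert_erase hv] at this) []
    rw [add_mul, one_mul]
    push_cast
    linarith

/-- The quantitative bound for fixed `n`. -/
lemma quantitative [DecidableEq V] [DecidableRel G.Adj] [Fintype V] (x : ℝ) (hx : 8 ≤ x)
    (d m T : ℕ) (hd : 0 < d) (hxn : x ^ d = n) (hm : 0 < m) (hG : Degen G d)
    (hnV : 2 * Fintype.card V + 2 ≤ n) (hT : Fintype.card V * (d * m) ≤ T) :
    failP (n := n) (ContainsCopy G) T []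
      ≤ Fintype.card V * (d * (8 * x ^ (d - 1) / m)) := by
  have hn : 0 < n := by omega
  have hx0 : 0 < x := by linarith
  let a : ℕ → ℕ := fun j => ⌈x ^ (d - j) / 2⌉₊
  have hlow : ∀ j, x ^ (d - j) / 2 ≤ a j := fun j => Nat.le_ceil _
  have hup : ∀ j, (a j : ℝ) ≤ x ^ (d - j) / 2 + 1 := fun j =>
    (Nat.ceil_lt_add_one (by positivity)).le
  have h := all_vertices (n := n) (G := G) hn a d m (8 * x ^ (d - 1) / m) (by positivity) hm hG ?_
    (fun j _ => Nat.ceil_pos.2 (by positivity)) ?_ (Fintype.card V) Finset.univ (by simp)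
  · refine le_trans ((failP_imp hn ?_ _ _).trans (failP_anti hn mono_emb hT _)) h
    rintro h ⟨φ, hi, H⟩
    exact ⟨⟨φ, by simpa [Set.injOn_univ] using hi⟩, fun a b hab => H a (by simp) b (by simp) hab⟩
  · intro j hj
    obtain ⟨e, he⟩ : ∃ e, d = j + 1 + e := Nat.exists_eq_add_of_le hj
    have e1 : d - (j + 1) = e := by omega
    have e2 : d - j = e + 1 := by omega
    have e3 : d - 1 = e + j := by omega
    have l1 := hlow j
    have u1 := hup (j + 1)
    rw [e1] at u1
    rw [e2] at l1
    have hy : 1 ≤ x ^ e := one_le_pow₀ (by linarith)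
    have hxx : x ^ d = x ^ (e + 1) * x ^ j := by rw [he]; ring
    rw [pow_succ] at l1
    refine ⟨4 * x ^ j, by positivity, ?_, ?_⟩
    · rw [← hxn, hxx]
      have : x ^ (e + 1) ≤ ((a j : ℝ) - a (j + 1)) * 4 := by
        rw [pow_succ]; nlinarith
      have hj0 : 0 ≤ x ^ j := by positivity
      nlinarith
    · have hm' : (m : ℝ) ≠ 0 := by positivity
      rw [mul_div_cancel₀ _ hm', e3, pow_add]
      have hj0 : 0 ≤ x ^ j := by positivity
      have : (a (j + 1) : ℝ) ≤ 2 * x ^ e := by linarith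
      nlinarith
  · have h0 := hup 0
    rw [Nat.sub_zero, hxn] at h0
    have h1 : (2 * Fintype.card V + 2 : ℝ) ≤ n := by exact_mod_cast hnV
    have : (a 0 + Fintype.card V : ℝ) ≤ n := by linarith
    exact_mod_cast this

end stages

lemma trivial_case {V : Type*} [Fintype V] (G : SimpleGraph V) [DecidableRel G.Adj]
    (hG : Degen G 0) {n : ℕ} (hn : 0 < n) (hV : Fintype.card V ≤ n) (T : ℕ) :
    failP (n := n) (ContainsCopy G) T [] = 0 := by
  classical
  refine failP_eq_zero hn ?_ _ _ ?_
  · rintro h st ⟨φ, H⟩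
    refine ⟨φ, fun a b hab => ?_⟩
    rcases H a b hab with h | h
    · exact Or.inl (List.mem_cons_of_mem _ h)
    · exact Or.inr (List.mem_cons_of_mem _ h)
  · obtain ⟨φ⟩ := Function.Embedding.nonempty_of_card_le (α := V) (β := Fin n) (by simpa using hV)
    refine ⟨φ, fun a b hab => ?_⟩
    exfalso
    obtain ⟨v, hv, hd⟩ := hG {a, b} ⟨a, by simp⟩
    rw [Nat.le_zero, Finset.card_eq_zero] at hd
    have h1 : ∀ u ∈ ({a, b} : Finset V), ¬ G.Adj v u := fun u hu huv => by
      have : u ∈ ({a, b} : Finset V).filter fun u => G.Adj v u := Finset.mem_filter.2 ⟨hu, huv⟩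
      rw [hd] at this
      simp at this
    simp only [Finset.mem_insert, Finset.mem_singleton] at hv
    rcases hv with rfl | rfl
    · exact h1 b (by simp) hab
    · exact h1 a (by simp) hab.symm

/-- The value tends to zero. -/
lemma failP_tendsto {V : Type*} [Fintype V] [DecidableEq V] (G : SimpleGraph V)
    [DecidableRel G.Adj] (d : ℕ) (hG : Degen G d) (ω : ℕ → ℝ) (hω : Tendsto ω atTop atTop) :
    Tendsto (fun n : ℕ => failP (n := n) (ContainsCopy G)
      (⌊(n : ℝ) ^ (((d : ℝ) - 1) / d) * ω n⌋₊) []) atTop (nhds 0) := by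
  rcases Nat.eq_zero_or_pos d with rfl | hd
  · refine tendsto_const_nhds.congr' ?_
    filter_upwards [eventually_ge_atTop (Fintype.card V + 1)] with n hn
    rw [trivial_case G hG (by omega) (by omega)]
  -- `K` is at least the number of stages
  set K : ℕ := Fintype.card V * d + 1 with hK
  have hK0 : (0 : ℝ) < K := by rw [hK]; positivity
  have hlim1 : Tendsto (fun n : ℕ => ω n / K - 2) atTop atTop :=
    tendsto_atTop_add_const_right _ _ (hω.atTop_div_const hK0)
  have hlim : Tendsto (fun n : ℕ => (8 * K : ℝ) / (ω n / K - 2)) atTop (nhds 0) :=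
    hlim1.const_div_atTop _
  have hxlim : Tendsto (fun n : ℕ => (n : ℝ) ^ ((1 : ℝ) / d)) atTop atTop :=
    (tendsto_rpow_atTop (by positivity)).comp tendsto_natCast_atTop_atTop
  refine tendsto_of_tendsto_of_tendsto_of_le_of_le' tendsto_const_nhds hlim
    (Eventually.of_forall fun n => failP_nonneg _ _) ?_
  filter_upwards [eventually_ge_atTop (2 * Fintype.card V + 2), hxlim.eventually_ge_atTop 8,
    hlim1.eventually_gt_atTop 0] with n hn hx hw
  set x : ℝ := (n : ℝ) ^ ((1 : ℝ) / d) with hxdef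
  have hd' : (d : ℝ) ≠ 0 := by positivity
  have hxd : x ^ d = n := by
    rw [hxdef, ← Real.rpow_natCast, ← Real.rpow_mul (by positivity)]
    field_simp
    simp
  have hxd1 : (n : ℝ) ^ (((d : ℝ) - 1) / d) = x ^ (d - 1) := by
    rw [hxdef, ← Real.rpow_natCast, ← Real.rpow_mul (by positivity), Nat.cast_sub hd]
    congr 1
    push_cast
    field_simp
  rw [hxd1]
  set y : ℝ := x ^ (d - 1) with hy
  have hy1 : 1 ≤ y := one_le_pow₀ (by linarith)
  set T := ⌊y * ω n⌋₊ with hT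
  have hT1 : y * ω n < T + 1 := Nat.lt_floor_add_one _
  have hm1 : (T : ℝ) < K * ((T / K : ℕ) + 1) := by
    exact_mod_cast Nat.lt_mul_div_succ T (by omega : 0 < K)
  set m := T / K with hmdef
  have hK1 : (1 : ℝ) ≤ K := by rw [hK]; push_cast; nlinarith [show (0:ℝ) ≤ Fintype.card V * d by positivity]
  have hmy : y * (ω n / K - 2) ≤ m := by
    have e : ω n = K * (ω n / K) := by field_simp
    set w := ω n / K
    rw [e] at hT1
    have : K * (y * (w - 2)) ≤ K * (m : ℝ) := by nlinarith
    exact le_of_mul_le_mul_left this hK0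
  have hmpos' : (0 : ℝ) < m := lt_of_lt_of_le (by positivity) hmy
  have hmpos : 0 < m := by exact_mod_cast hmpos'
  have hKT : Fintype.card V * (d * m) ≤ T := by
    have := Nat.mul_div_le T K
    rw [← hmdef, hK] at this
    nlinarith
  refine (quantitative x hx d m T hd hxd hmpos hG hn hKT).trans ?_
  have h8 : 8 * y / m ≤ 8 / (ω n / K - 2) := by
    rw [div_le_div_iff₀ hmpos' hw]
    nlinarith
  have hKc : (Fintype.card V : ℝ) * d ≤ K := by rw [hK]; push_cast; linarith
  calc (Fintype.card V : ℝ) * (d * (8 * y / m)) = (Fintype.card V * d) * (8 * y / m) := by ring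
    _ ≤ K * (8 / (ω n / K - 2)) := by gcongr
    _ = (8 * K : ℝ) / (ω n / K - 2) := by ring

end SemiRandomGraph

open SemiRandomGraph in
/-- **Theorem (Ben-Eliezer, Hefetz, Kronenberg, Parczyk, Shikhelman, Stojaković).**
For a fixed graph `G` of degeneracy `d` and any function `ω → ∞`, there is a strategy
for the semi-random graph process that a.a.s. creates a copy of `G` within
`t = ⌊n^{(d-1)/d} ω(n)⌋` rounds. -/
theorem semiRandom_graph_upper_bound
    {V : Type*} [Fintype V] [DecidableEq V] (G : SimpleGraph V) [DecidableRel G.Adj]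
    (d : ℕ) (hG : DegeneracyEq G d)
    (ω : ℕ → ℝ) (hω : Tendsto ω atTop atTop) :
    ∃ S : (n : ℕ) → Strategy n,
      Tendsto
        (fun n : ℕ => probContains n (S n) G (⌊(n : ℝ) ^ (((d : ℝ) - 1) / d) * ω n⌋₊))
        atTop (nhds 1) := by
  classical
  have hex : ∀ n : ℕ, ∃ S : Strategy n, ∀ hn : 0 < n,
      1 - ENNReal.ofReal (failP (n := n) (ContainsCopy G)
        (⌊(n : ℝ) ^ (((d : ℝ) - 1) / d) * ω n⌋₊) []) ≤
      (historyPMF hn S (⌊(n : ℝ) ^ (((d : ℝ) - 1) / d) * ω n⌋₊)).toOuterMeasure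
        {h | ContainsCopy G h} := by
    intro n
    rcases Nat.eq_zero_or_pos n with rfl | hn
    · exact ⟨fun _ u => u.elim0, fun hn => absurd hn (lt_irrefl _)⟩
    · obtain ⟨S, hS⟩ := exists_strategy hn (ContainsCopy G)
        (⌊(n : ℝ) ^ (((d : ℝ) - 1) / d) * ω n⌋₊)
      exact ⟨S, fun _ => hS⟩
  choose S hS using hex
  refine ⟨S, ?_⟩
  have h1 := failP_tendsto G d hG.1 ω hω
  have h2 := ENNReal.Tendsto.sub (tendsto_const_nhds (x := (1 : ℝ≥0∞)))
    (ENNReal.tendsto_ofReal h1) (Or.inl ENNReal.one_ne_top)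
  rw [ENNReal.ofReal_zero, tsub_zero] at h2
  refine tendsto_of_tendsto_of_tendsto_of_le_of_le' h2 tendsto_const_nhds ?_ ?_
  · filter_upwards [eventually_gt_atTop 0] with n hn
    rw [probContains, dif_pos hn]
    exact hS n hn
  · filter_upwards with n
    rw [probContains]
    split_ifs with hn
    · rw [PMF.toOuterMeasure_apply, ← (historyPMF hn (S n) _).tsum_coe]
      exact ENNReal.tsum_le_tsum fun h => Set.indicator_le_self _ _ _
    · simp
end

section
/- Let G be a fixed graph of degeneracy d ≥ 2 and let ω = ω(n) be any function tending to infinity as n → ∞. Then for every strategy S for the semi-random graph process, with t = t(n) = ⌊n^{(d−1)/d} / ω(n)⌋, the probability that H_t contains a subgraph isomorphic to G tends to 0 as n → ∞. -/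
open Filter
open scoped ENNReal

namespace SemiRandomGraph

/-! ### Deterministic part -/

/-- Vertices reachable from `x` by at most `j` out-steps (from square to circle). -/
def ball {n : ℕ} (h : List (Step n)) (x : Fin n) : ℕ → Finset (Fin n)
  | 0 => {x}
  | j + 1 => ball h x j ∪ (ball h x j).biUnion fun a => Finset.univ.filter fun b => (a, b) ∈ h

/-- Number of rounds whose square lands in the set `B h x` determined by the past `h`. -/
def cnt {n : ℕ} (B : List (Step n) → Fin n → Finset (Fin n)) : List (Step n) → Fin n → ℕ
  | [], _ => 0
  | s :: h, x => cnt B h x + if s.1 ∈ B h x then 1 else 0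

def tball {n : ℕ} (M K : ℕ) (h : List (Step n)) (x : Fin n) : Finset (Fin n) :=
  if (ball h x K).card ≤ M then ball h x K else {x}

def Reach {n : ℕ} (h : List (Step n)) : Fin n → Fin n → Prop :=
  Relation.ReflTransGen fun a b => (a, b) ∈ h

open Classical in
noncomputable def cntR {n : ℕ} : List (Step n) → Fin n → ℕ
  | [], _ => 0
  | s :: h, x => cntR h x + if Reach h x s.1 then 1 else 0

def nb {n : ℕ} (h : List (Step n)) (v : Fin n) : Finset (Fin n) :=
  Finset.univ.filter fun b => (v, b) ∈ h ∨ (b, v) ∈ h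

lemma Reach.cons {n : ℕ} {h : List (Step n)} {a b : Fin n} (s : Step n) (r : Reach h a b) :
    Reach (s :: h) a b :=
  Relation.ReflTransGen.mono (fun _ _ hab => List.mem_cons_of_mem s hab) _ _ r

lemma nb_cons_le {n : ℕ} (h : List (Step n)) (a b v : Fin n) :
    (nb ((a, b) :: h) v).card ≤ (nb h v).card + 1 := by
  by_cases hv : v = a
  · refine le_trans (Finset.card_le_card (t := insert b (nb h v)) ?_) (Finset.card_insert_le _ _)
    intro c hc
    simp only [nb, Finset.mem_filter, Finset.mem_univ, true_and, List.mem_cons, Prod.mk.injEq,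
      Finset.mem_insert] at hc ⊢
    grind
  · refine le_trans (Finset.card_le_card (t := insert a (nb h v)) ?_) (Finset.card_insert_le _ _)
    intro c hc
    simp only [nb, Finset.mem_filter, Finset.mem_univ, true_and, List.mem_cons, Prod.mk.injEq,
      Finset.mem_insert] at hc ⊢
    grind

lemma nb_cons_eq {n : ℕ} (h : List (Step n)) (a b v : Fin n) (ha : v ≠ a) (hb : v ≠ b) :
    nb ((a, b) :: h) v = nb h v := by
  ext c
  simp only [nb, Finset.mem_filter, Finset.mem_univ, true_and, List.mem_cons, Prod.mk.injEq]
  grind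

lemma key {n : ℕ} (h : List (Step n)) (w : Fin n) :
    ∃ x v, Reach h x v ∧ Reach h v w ∧ (nb h v).card ≤ cntR h x := by
  induction h generalizing w with
  | nil => exact ⟨w, w, .refl, .refl, by simp [nb]⟩
  | cons s h ih =>
    obtain ⟨a, b⟩ := s
    have good : ∀ x v, Reach h x a → (nb h v).card ≤ cntR h x →
        (nb ((a, b) :: h) v).card ≤ cntR ((a, b) :: h) x := by
      intro x v hx hv
      have := nb_cons_le h a b v
      simp only [cntR, if_pos hx]
      omega
    obtain ⟨x, v, h1, h2, h3⟩ := ih w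
    by_cases hx : Reach h x a
    · exact ⟨x, v, h1.cons _, h2.cons _, good x v hx h3⟩
    · have hva : v ≠ a := by rintro rfl; exact hx h1
      by_cases hvb : v = b
      · obtain ⟨x', v', h1', h2', h3'⟩ := ih a
        refine ⟨x', v', h1'.cons _, ?_, good x' v' (h1'.trans h2') h3'⟩
        subst hvb
        exact ((h2'.cons _).tail List.mem_cons_self).trans (h2.cons _)
      · refine ⟨x, v, h1.cons _, h2.cons _, ?_⟩
        rw [nb_cons_eq h a b v hva hvb]
        simp only [cntR]
        omega

lemma self_mem_ball {n : ℕ} (h : List (Step n)) (x : Fin n) (j : ℕ) : x ∈ ball h x j := by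
  induction j with
  | zero => simp [ball]
  | succ j ih => exact Finset.mem_union_left _ ih

lemma self_mem_tball {n : ℕ} (M K : ℕ) (h : List (Step n)) (x : Fin n) : x ∈ tball M K h x := by
  unfold tball
  split_ifs
  · exact self_mem_ball _ _ _
  · simp

lemma ball_mono {n : ℕ} {h h' : List (Step n)} (hh : h' ⊆ h) (x : Fin n) (j : ℕ) :
    ball h' x j ⊆ ball h x j := by
  induction j with
  | zero => simp [ball]
  | succ j ih =>
    intro c hc
    simp only [ball, Finset.mem_union, Finset.mem_biUnion, Finset.mem_filter, Finset.mem_univ,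
      true_and] at hc ⊢
    rcases hc with hc | ⟨a, ha, hc⟩
    · exact Or.inl (ih hc)
    · exact Or.inr ⟨a, ih ha, hh hc⟩

lemma ball_subset {n : ℕ} {h : List (Step n)} (U : Finset (Fin n))
    (hU : ∀ s ∈ h, s.2 ∈ U) (x : Fin n) (j : ℕ) : ball h x j ⊆ insert x U := by
  induction j with
  | zero => simp [ball]
  | succ j ih =>
    intro c hc
    simp only [ball, Finset.mem_union, Finset.mem_biUnion, Finset.mem_filter, Finset.mem_univ,
      true_and] at hc
    rcases hc with hc | ⟨a, ha, hc⟩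
    · exact ih hc
    · exact Finset.mem_insert_of_mem (hU _ hc)

lemma ball_dichotomy {n : ℕ} (h : List (Step n)) (x : Fin n) (j : ℕ) :
    (∀ a, Reach h x a → a ∈ ball h x j) ∨ j + 1 ≤ (ball h x j).card := by
  induction j with
  | zero => right; simp [ball]
  | succ j ih =>
    rcases ih with ih | ih
    · exact Or.inl fun a ha => Finset.mem_union_left _ (ih a ha)
    · by_cases he : ball h x (j + 1) = ball h x j
      · left
        intro a ha
        induction ha with
        | refl => exact self_mem_ball _ _ _
        | tail _ hbc ihb =>
          rw [he] at ihb
          refine Finset.mem_union_right _ ?_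
          simp only [Finset.mem_biUnion, Finset.mem_filter, Finset.mem_univ, true_and]
          exact ⟨_, ihb, hbc⟩
      · right
        have hs : ball h x j ⊆ ball h x (j + 1) := Finset.subset_union_left
        have := Finset.card_lt_card (hs.ssubset_of_ne (Ne.symm he))
        omega

lemma reach_mem_ball {n : ℕ} {h : List (Step n)} (U : Finset (Fin n))
    (hU : ∀ s ∈ h, s.2 ∈ U) (x a : Fin n) (K : ℕ) (hK : U.card + 1 ≤ K) (hr : Reach h x a) :
    a ∈ ball h x K := by
  rcases ball_dichotomy h x K with h1 | h1
  · exact h1 a hr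
  · have := Finset.card_le_card (ball_subset U hU x K)
    have := Finset.card_insert_le x U
    omega

lemma cntR_filter_le {n : ℕ} (U : Finset (Fin n)) (K : ℕ) (hK : U.card + 1 ≤ K)
    (h : List (Step n)) (x : Fin n) :
    cntR (h.filter fun s => decide (s.1 ∈ U ∧ s.2 ∈ U)) x ≤ cnt (fun h x => ball h x K) h x := by
  induction h with
  | nil => simp [cntR]
  | cons s h ih =>
    rw [List.filter_cons]
    split_ifs with hs
    · simp only [cntR, cnt]
      refine add_le_add ih ?_
      split_ifs with h1 h2
      · rfl
      · refine absurd ?_ h2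
        refine ball_mono (List.filter_subset_self _) x K (reach_mem_ball U ?_ x _ K hK h1)
        intro s hs
        simp only [List.mem_filter, decide_eq_true_eq] at hs
        exact hs.2.2
      · simp
      · simp
    · simp only [cnt]
      omega

lemma out_le_cnt {n : ℕ} (B : List (Step n) → Fin n → Finset (Fin n)) (hB : ∀ h x, x ∈ B h x)
    (h : List (Step n)) (a : Fin n) :
    (Finset.univ.filter fun b => (a, b) ∈ h).card ≤ cnt B h a := by
  induction h with
  | nil => simp
  | cons s h ih =>
    obtain ⟨u, v⟩ := s
    by_cases hu : u = a
    · subst hu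
      simp only [cnt, hB, if_true]
      refine le_trans ?_ (Nat.add_le_add_right ih 1)
      refine le_trans (Finset.card_le_card ?_) (Finset.card_insert_le v _)
      intro c hc
      simp only [Finset.mem_filter, Finset.mem_univ, true_and, List.mem_cons, Prod.mk.injEq,
        Finset.mem_insert] at hc ⊢
      exact hc
    · refine le_trans (Finset.card_le_card ?_) (le_trans ih (Nat.le_add_right _ _))
      intro c hc
      simp only [Finset.mem_filter, Finset.mem_univ, true_and, List.mem_cons, Prod.mk.injEq] at hc ⊢
      grind

lemma ball_card_le {n : ℕ} (h : List (Step n)) (d : ℕ)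
    (hd : ∀ a, (Finset.univ.filter fun b => (a, b) ∈ h).card < d) (x : Fin n) (j : ℕ) :
    (ball h x j).card ≤ d ^ j := by
  induction j with
  | zero => simp [ball]
  | succ j ih =>
    have h1 : ((ball h x j).biUnion fun a => Finset.univ.filter fun b => (a, b) ∈ h).card
        ≤ (ball h x j).card * (d - 1) :=
      Finset.card_biUnion_le_card_mul _ _ _ fun a _ => by have := hd a; omega
    have h2 := Finset.card_union_le (ball h x j)
      ((ball h x j).biUnion fun a => Finset.univ.filter fun b => (a, b) ∈ h)
    have h3 : 1 ≤ d := by have := hd x; omega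
    calc (ball h x (j + 1)).card ≤ (ball h x j).card + (ball h x j).card * (d - 1) := by
            simp only [ball]; omega
      _ = (ball h x j).card * d := by
            obtain ⟨e, rfl⟩ := Nat.exists_eq_add_of_le h3
            simp only [Nat.add_sub_cancel_left]; ring
      _ ≤ d ^ j * d := Nat.mul_le_mul_right _ ih
      _ = d ^ (j + 1) := (pow_succ _ _).symm

lemma cnt_trunc {n : ℕ} (d K : ℕ) (h : List (Step n))
    (hh : ∀ x, cnt (tball (d ^ K) K) h x < d) (x : Fin n) :
    cnt (fun h x => ball h x K) h x = cnt (tball (d ^ K) K) h x := by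
  induction h with
  | nil => simp [cnt]
  | cons s h ih =>
    have h0 : ∀ x, cnt (tball (d ^ K) K) h x < d := fun x =>
      lt_of_le_of_lt (Nat.le_add_right _ _) (hh x)
    have h1 := ball_card_le h d
      (fun a => lt_of_le_of_lt (out_le_cnt _ (self_mem_tball (d ^ K) K) h a) (h0 a)) x K
    simp only [cnt, ih h0, tball, if_pos h1]

lemma tball_card_le {n : ℕ} (M K : ℕ) (hM : 1 ≤ M) (h : List (Step n)) (x : Fin n) :
    (tball M K h x).card ≤ M := by
  unfold tball
  split_ifs with h1
  · exact h1
  · simpa using hM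

lemma deterministic {V : Type*} [Fintype V] [DecidableEq V] (G : SimpleGraph V)
    [DecidableRel G.Adj] (d : ℕ) (hG : DegeneracyEq G d) (hd : 2 ≤ d) {n : ℕ}
    (h : List (Step n)) (hc : ContainsCopy G h) :
    ∃ x, d ≤ cnt (tball (d ^ (Fintype.card V + 1)) (Fintype.card V + 1)) h x := by
  have h1 : ¬ Degen G (d - 1) := fun hh => by have := hG.2 _ hh; omega
  unfold Degen at h1
  push Not at h1
  obtain ⟨s, ⟨a₀, ha₀⟩, hs⟩ := h1
  obtain ⟨φ, hφ⟩ := hc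
  by_contra! hcon
  set K := Fintype.card V + 1 with hK
  set U : Finset (Fin n) := s.map φ with hU
  have hUK : U.card + 1 ≤ K := by
    rw [hU, Finset.card_map, hK]
    exact Nat.succ_le_succ (Finset.card_le_univ s)
  set h' := h.filter fun s => decide (s.1 ∈ U ∧ s.2 ∈ U) with hh'
  obtain ⟨x, v, _, hvw, hle⟩ := key h' (φ a₀)
  have hvU : v ∈ U := by
    rcases Relation.ReflTransGen.cases_head hvw with rfl | ⟨c, hc, _⟩
    · exact Finset.mem_map_of_mem _ ha₀
    · rw [hh'] at hc
      simp only [List.mem_filter, decide_eq_true_eq] at hc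
      exact hc.2.1
  obtain ⟨a, ha, rfl⟩ := Finset.mem_map.1 hvU
  have hdeg : d ≤ (nb h' (φ a)).card := by
    have h2 := hs a ha
    have h3 : ((s.filter fun u => G.Adj a u).map φ).card ≤ (nb h' (φ a)).card := by
      refine Finset.card_le_card ?_
      intro c hc
      obtain ⟨b, hb, rfl⟩ := Finset.mem_map.1 hc
      obtain ⟨hb, hab⟩ := Finset.mem_filter.1 hb
      have hbU : φ b ∈ U := Finset.mem_map_of_mem _ hb
      simp only [nb, hh', Finset.mem_filter, Finset.mem_univ, true_and, List.mem_filter,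
        decide_eq_true_eq]
      rcases hφ a b hab with h4 | h4
      · exact Or.inl ⟨h4, hvU, hbU⟩
      · exact Or.inr ⟨h4, hbU, hvU⟩
    rw [Finset.card_map] at h3
    omega
  have h5 := cntR_filter_le U K hUK h x
  have h6 := cnt_trunc d K h hcon x
  have h7 := hcon x
  rw [← hh'] at h5
  omega

/-! ### Probabilistic part -/

lemma tsum_bind {α β : Type*} (p : PMF α) (q : α → PMF β) (f : β → ℝ≥0∞) :
    ∑' b, (p.bind q) b * f b = ∑' a, p a * ∑' b, q a b * f b := by
  simp only [PMF.bind_apply, ← ENNReal.tsum_mul_right, ← ENNReal.tsum_mul_left]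
  rw [ENNReal.tsum_comm]
  simp only [mul_assoc]

lemma tsum_pure {α : Type*} (a : α) (f : α → ℝ≥0∞) :
    ∑' b, (PMF.pure a) b * f b = f a := by
  rw [tsum_eq_single a]
  · simp
  · intro b hb
    simp [PMF.pure_apply, hb]

lemma tsum_map {α β : Type*} (p : PMF α) (g : α → β) (f : β → ℝ≥0∞) :
    ∑' b, (p.map g) b * f b = ∑' a, p a * f (g a) := by
  rw [PMF.map, tsum_bind]
  simp only [Function.comp, tsum_pure]

lemma prob_cnt {n : ℕ} (hn : 0 < n) (S : Strategy n) (M : ℕ)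
    (B : List (Step n) → Fin n → Finset (Fin n)) (hB : ∀ h x, (B h x).card ≤ M)
    (x : Fin n) (t j : ℕ) :
    ∑' h, historyPMF hn S t h * (if j ≤ cnt B h x then 1 else 0)
      ≤ ((M : ℝ≥0∞) / n * t) ^ j := by
  induction t generalizing j with
  | zero =>
    simp only [historyPMF]
    rw [tsum_pure]
    cases j with
    | zero => simp
    | succ j => simp [cnt]
  | succ t ih =>
    cases j with
    | zero => simp [PMF.tsum_coe]
    | succ j =>
      have hstep : ∀ h : List (Step n),
          ∑' b, ((@PMF.uniformOfFintype (Fin n) _ (Fin.pos_iff_nonempty.mp hn)).bind fun u =>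
            (S h u).map fun v => (u, v) :: h) b * (if j + 1 ≤ cnt B b x then 1 else 0)
          ≤ (if j + 1 ≤ cnt B h x then 1 else 0)
            + (M : ℝ≥0∞) / n * (if j ≤ cnt B h x then 1 else 0) := by
        intro h
        rw [tsum_bind]
        simp only [tsum_map, cnt]
        have hpt : ∀ u : Fin n,
            (@PMF.uniformOfFintype (Fin n) _ (Fin.pos_iff_nonempty.mp hn)) u *
              (if j + 1 ≤ cnt B h x + (if u ∈ B h x then 1 else 0) then (1 : ℝ≥0∞) else 0)
            ≤ (@PMF.uniformOfFintype (Fin n) _ (Fin.pos_iff_nonempty.mp hn)) u *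
                (if j + 1 ≤ cnt B h x then 1 else 0)
              + (if u ∈ B h x then (n : ℝ≥0∞)⁻¹ else 0) * (if j ≤ cnt B h x then 1 else 0) := by
          intro u
          by_cases h1 : j + 1 ≤ cnt B h x
          · have h2 : j + 1 ≤ cnt B h x + (if u ∈ B h x then 1 else 0) := by omega
            simp only [h1, h2, if_true]
            exact le_self_add
          · by_cases h3 : u ∈ B h x
            · by_cases h4 : j ≤ cnt B h x
              · simp [h1, h3, h4, PMF.uniformOfFintype_apply]
              · simp [h3, h4]
            · simp [h1, h3]
        refine le_trans (ENNReal.tsum_le_tsum fun u => le_trans (le_of_eq ?_) (hpt u)) ?_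
        · congr 1
          by_cases hc : j + 1 ≤ cnt B h x + (if u ∈ B h x then 1 else 0)
          · simp only [hc, if_true, mul_one, PMF.tsum_coe]
          · simp only [hc, if_false, mul_zero, tsum_zero]
        rw [ENNReal.tsum_add, ENNReal.tsum_mul_right, ENNReal.tsum_mul_right, PMF.tsum_coe,
          one_mul]
        gcongr
        rw [tsum_fintype, Finset.sum_ite_mem, Finset.univ_inter, Finset.sum_const, nsmul_eq_mul,
          div_eq_mul_inv]
        gcongr
        exact_mod_cast hB h x
      simp only [historyPMF]
      rw [tsum_bind]
      calc _ ≤ ∑' h, historyPMF hn S t h * ((if j + 1 ≤ cnt B h x then 1 else 0)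
            + (M : ℝ≥0∞) / n * (if j ≤ cnt B h x then 1 else 0)) :=
            ENNReal.tsum_le_tsum fun h => mul_le_mul_right (hstep h) _
        _ = (∑' h, historyPMF hn S t h * (if j + 1 ≤ cnt B h x then 1 else 0))
            + (M : ℝ≥0∞) / n * ∑' h, historyPMF hn S t h * (if j ≤ cnt B h x then 1 else 0) := by
            rw [← ENNReal.tsum_mul_left, ← ENNReal.tsum_add]
            congr 1; ext h; ring
        _ ≤ ((M : ℝ≥0∞) / n * t) ^ (j + 1) + (M : ℝ≥0∞) / n * ((M : ℝ≥0∞) / n * t) ^ j := by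
            gcongr
            · exact ih _
            · exact ih _
        _ = ((M : ℝ≥0∞) / n * t) ^ j * ((M : ℝ≥0∞) / n * (t + 1)) := by ring
        _ ≤ ((M : ℝ≥0∞) / n * (t + 1)) ^ j * ((M : ℝ≥0∞) / n * (t + 1)) := by
            gcongr
            exact le_self_add
        _ = _ := by rw [← pow_succ]; push_cast; rfl

lemma probContains_le {V : Type*} [Fintype V] [DecidableEq V] (G : SimpleGraph V)
    [DecidableRel G.Adj] (d : ℕ) (hG : DegeneracyEq G d) (hd : 2 ≤ d) (n : ℕ) (S : Strategy n)
    (t : ℕ) :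
    probContains n S G t
      ≤ n * (((d ^ (Fintype.card V + 1) : ℕ) : ℝ≥0∞) / n * t) ^ d := by
  unfold probContains
  split_ifs with hn
  swap
  · exact zero_le
  set K := Fintype.card V + 1
  have hB := tball_card_le (n := n) (d ^ K) K (Nat.one_le_pow _ _ (by omega))
  rw [PMF.toOuterMeasure_apply]
  calc _ ≤ ∑' h, ∑ x : Fin n,
        historyPMF hn S t h * (if d ≤ cnt (tball (d ^ K) K) h x then 1 else 0) := by
        refine ENNReal.tsum_le_tsum fun h => ?_
        by_cases hc : h ∈ {h | ContainsCopy G h}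
        · rw [Set.indicator_of_mem hc]
          obtain ⟨x, hx⟩ := deterministic G d hG hd h hc
          refine le_trans ?_ (Finset.single_le_sum (fun _ _ => zero_le) (Finset.mem_univ x))
          rw [if_pos hx, mul_one]
        · rw [Set.indicator_of_notMem hc]
          exact zero_le
    _ = ∑ x : Fin n, ∑' h,
        historyPMF hn S t h * (if d ≤ cnt (tball (d ^ K) K) h x then 1 else 0) :=
        Summable.tsum_finsetSum fun _ _ => ENNReal.summable
    _ ≤ ∑ _x : Fin n, (((d ^ K : ℕ) : ℝ≥0∞) / n * t) ^ d :=
        Finset.sum_le_sum fun x _ => prob_cnt hn S _ _ hB x t d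
    _ = _ := by simp

lemma real_bound (n d t : ℕ) (M w : ℝ) (hn : 0 < n) (hd : 2 ≤ d) (hM : 0 ≤ M) (hw : 0 < w)
    (ht : (t : ℝ) ≤ (n : ℝ) ^ (((d : ℝ) - 1) / d) / w) :
    (n : ℝ) * (M / n * t) ^ d ≤ (M / w) ^ d := by
  have hn' : (0 : ℝ) < n := by exact_mod_cast hn
  have hd' : (d : ℝ) ≠ 0 := by positivity
  calc (n : ℝ) * (M / n * t) ^ d
      ≤ n * (M / n * ((n : ℝ) ^ (((d : ℝ) - 1) / d) / w)) ^ d := by gcongr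
    _ = (M / w) ^ d * (n * ((n : ℝ) ^ (((d : ℝ) - 1) / d)) ^ d / n ^ d) := by
        simp only [mul_pow, div_pow]; ring
    _ = (M / w) ^ d := by
        rw [← Real.rpow_natCast ((n : ℝ) ^ (((d : ℝ) - 1) / d)) d, ← Real.rpow_mul hn'.le,
          div_mul_cancel₀ _ hd', Real.rpow_sub hn', Real.rpow_natCast, Real.rpow_one]
        field_simp

end SemiRandomGraph

open SemiRandomGraph in

open SemiRandomGraph in
/-- **Theorem 2 (main result).** For a fixed graph `G` of degeneracy `d ≥ 2` and any
function `ω → ∞`, no strategy for the semi-random graph process can a.a.s. create a copy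
of `G` within `t = ⌊n^{(d-1)/d} / ω(n)⌋` rounds: the probability of containing a copy of
`G` tends to `0`. -/
theorem semiRandom_graph_lower_bound
    {V : Type*} [Fintype V] [DecidableEq V] (G : SimpleGraph V) [DecidableRel G.Adj]
    (d : ℕ) (hG : DegeneracyEq G d) (hd : 2 ≤ d)
    (ω : ℕ → ℝ) (hω : Tendsto ω atTop atTop) :
    ∀ S : (n : ℕ) → Strategy n,
      Tendsto
        (fun n : ℕ => probContains n (S n) G (⌊(n : ℝ) ^ (((d : ℝ) - 1) / d) / ω n⌋₊))
        atTop (nhds 0) := by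
  intro S
  set M : ℕ := d ^ (Fintype.card V + 1) with hM
  have hlim : Tendsto (fun n => ENNReal.ofReal (((M : ℝ) / ω n) ^ d)) atTop (nhds 0) := by
    rw [← ENNReal.ofReal_zero]
    refine ENNReal.tendsto_ofReal ?_
    have h1 : Tendsto (fun n => (M : ℝ) / ω n) atTop (nhds 0) := hω.const_div_atTop _
    have h2 := h1.pow d
    rwa [zero_pow (by omega)] at h2
  refine tendsto_of_tendsto_of_tendsto_of_le_of_le' tendsto_const_nhds hlim
    (Eventually.of_forall fun _ => zero_le) ?_
  filter_upwards [eventually_gt_atTop 0, hω.eventually_gt_atTop 0] with n hn hw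
  refine le_trans (probContains_le G d hG hd n (S n) _) ?_
  have hn' : (0 : ℝ) < n := by exact_mod_cast hn
  set t := ⌊(n : ℝ) ^ (((d : ℝ) - 1) / d) / ω n⌋₊ with ht
  have hb := real_bound n d t M (ω n) hn hd (Nat.cast_nonneg _) hw
    (Nat.floor_le (by positivity))
  refine le_trans (le_of_eq ?_) (ENNReal.ofReal_le_ofReal hb)
  rw [ENNReal.ofReal_mul hn'.le, ENNReal.ofReal_pow (by positivity),
    ENNReal.ofReal_mul (by positivity), ENNReal.ofReal_div_of_pos hn']
  simp only [ENNReal.ofReal_natCast, hM]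
end

section
/- Let r = 1, s ≥ 2, and let G be a fixed s-uniform hypergraph of degeneracy d ∈ ℕ. Then τ^{(1)}_{P_G} = (d−1)/d. -/
open Filter
open scoped ENNReal

namespace SemiRandomHypergraph

/-- The collection of `k`-element subsets of `Fin n`. -/
abbrev Col (n k : ℕ) := {A : Finset (Fin n) // A.card = k}

lemma col_nonempty {n k : ℕ} (h : k ≤ n) : Nonempty (Col n k) := by
  obtain ⟨t, -, ht⟩ :=
    Finset.exists_subset_card_eq (show k ≤ (Finset.univ : Finset (Fin n)).card by simpa using h)
  exact ⟨⟨t, ht⟩⟩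

/-- One round of the semi-random `(r,s)`-hypergraph process: the random `r`-set `U_t`
together with the player's reply, an `(s-r)`-set `V_t` (which may overlap `U_t`). -/
abbrev Step (n r s : ℕ) := Col n r × Col n (s - r)

/-- A strategy of the player: given the history so far (most recent round first) and the
current random `r`-set `U_t`, a probability distribution for the reply `V_t`. -/
def Strategy (n r s : ℕ) := List (Step n r s) → Col n r → PMF (Col n (s - r))

/-- The distribution of the history (most recent round first) after `t` rounds of the
semi-random hypergraph process played with strategy `S`. -/
noncomputable def historyPMF {n r s : ℕ} (h : Nonempty (Col n r)) (S : Strategy n r s) :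
    ℕ → PMF (List (Step n r s))
  | 0 => PMF.pure []
  | t + 1 =>
      (historyPMF h S t).bind fun hist =>
        (@PMF.uniformOfFintype (Col n r) _ h).bind fun U =>
          (S hist U).map fun W => (U, W) :: hist

/-- The multi-hypergraph `H_t^{(r,s)}` (recorded by its history `hist`; the edge created
in a round is the multiset `U_t + V_t`) contains a sub-hypergraph isomorphic to the
hypergraph with edge set `E`. -/
def ContainsCopy {V : Type*} {n r s : ℕ} (E : Finset (Finset V))
    (hist : List (Step n r s)) : Prop :=
  ∃ φ : V ↪ Fin n, ∀ e ∈ E, ∃ p ∈ hist,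
    Multiset.map (φ : V → Fin n) e.val = p.1.1.val + p.2.1.val

/-- The probability that after `t` rounds the multi-hypergraph `H_t^{(r,s)}` built with
strategy `S` contains a copy of the hypergraph with edge set `E`. -/
noncomputable def probContains {V : Type*} (n r s : ℕ) (E : Finset (Finset V))
    (S : Strategy n r s) (t : ℕ) : ℝ≥0∞ :=
  if h : r ≤ n then
    (historyPMF (col_nonempty h) S t).toOuterMeasure {hist | ContainsCopy E hist}
  else 0

/-- `τ^{(r)}_{P_G}(q, n)`: the least number of rounds needed so that some strategy makes
the probability of containing a copy of `G` at least `q` (`⊤` if impossible). -/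
noncomputable def tauQ {V : Type*} (r s : ℕ) (E : Finset (Finset V)) (q : ℝ≥0∞)
    (n : ℕ) : ℕ∞ :=
  ⨅ S : Strategy n r s,
    sInf {c : ℕ∞ | ∃ t : ℕ, c = (t : ℕ∞) ∧ q ≤ probContains n r s E S t}

/-- Logarithm on `ℕ∞`, with `log ⊤ = ⊤`, valued in `EReal`. -/
noncomputable def elog (m : ℕ∞) : EReal :=
  WithTop.recTopCoe ⊤ (fun t : ℕ => ((Real.log t : ℝ) : EReal)) m

/-- `τ^{(r)}_{P_G} = lim_{q→1⁻} limsup_{n→∞} ln(τ^{(r)}_{P_G}(q,n)) / ln n`; since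
`q ↦ limsup_n …` is non-decreasing, the limit as `q → 1⁻` equals the supremum over
`q ∈ (0,1)`. -/
noncomputable def tauExp {V : Type*} (r s : ℕ) (E : Finset (Finset V)) : EReal :=
  ⨆ q ∈ Set.Ioo (0 : ℝ≥0∞) 1,
    Filter.limsup
      (fun n : ℕ => elog (tauQ r s E q n) * (((Real.log n)⁻¹ : ℝ) : EReal)) atTop

/-- The hypergraph with edge set `E` is `d`-degenerate: every (induced, hence every)
sub-hypergraph has a vertex of degree at most `d`. -/
def Degen {V : Type*} [DecidableEq V] (E : Finset (Finset V)) (d : ℕ) : Prop :=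
  ∀ S : Finset V, S.Nonempty → ∃ v ∈ S, (E.filter fun e => v ∈ e ∧ e ⊆ S).card ≤ d

/-- The hypergraph with edge set `E` has degeneracy exactly `d`. -/
def DegeneracyEq {V : Type*} [DecidableEq V] (E : Finset (Finset V)) (d : ℕ) : Prop :=
  Degen E d ∧ ∀ d' : ℕ, Degen E d' → d ≤ d'

end SemiRandomHypergraph

namespace SemiRandomHypergraph

open Classical in
noncomputable def colOne (n : ℕ) : Fin n ≃ Col n 1 :=
  Equiv.ofBijective (fun u => ⟨{u}, Finset.card_singleton u⟩) (by
    constructor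
    · intro a b h
      simpa using h
    · rintro ⟨A, hA⟩
      obtain ⟨a, rfl⟩ := Finset.card_eq_one.1 hA
      exact ⟨a, rfl⟩)

lemma colOne_val {n : ℕ} (u : Fin n) : (colOne n u).1 = {u} := rfl

lemma exists_colOne {n : ℕ} (U : Col n 1) : ∃ u, U = colOne n u :=
  ⟨(colOne n).symm U, by simp⟩

lemma card_col_one (n : ℕ) : Fintype.card (Col n 1) = n := by
  rw [← Fintype.card_congr (colOne n)]; simp

section pmf
variable {α β : Type*}

lemma tsum_bind_mul (p : PMF α) (f : α → PMF β) (g : β → ℝ≥0∞) :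
    ∑' b, (p.bind f) b * g b = ∑' a, p a * ∑' b, f a b * g b := by
  simp_rw [PMF.bind_apply, ← ENNReal.tsum_mul_right, ← ENNReal.tsum_mul_left]
  rw [ENNReal.tsum_comm]
  simp_rw [mul_assoc]

lemma tsum_pure_mul (a : α) (g : α → ℝ≥0∞) :
    ∑' b, (PMF.pure a) b * g b = g a := by
  classical
  rw [tsum_eq_single a]
  · simp
  · intro b hb; simp [PMF.pure_apply, hb]

lemma tsum_map_mul (p : PMF α) (f : α → β) (g : β → ℝ≥0∞) :
    ∑' b, (p.map f) b * g b = ∑' a, p a * g (f a) := by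
  rw [PMF.map, tsum_bind_mul]
  simp only [Function.comp, tsum_pure_mul]

end pmf

/-- expectation of a function of the history after `t` rounds -/
noncomputable def Ex {n s : ℕ} (h0 : Nonempty (Col n 1)) (S : Strategy n 1 s) (t : ℕ)
    (g : List (Step n 1 s) → ℝ≥0∞) : ℝ≥0∞ :=
  ∑' h, historyPMF h0 S t h * g h

section Ex
variable {n s : ℕ} (h0 : Nonempty (Col n 1)) (S : Strategy n 1 s)

lemma Ex_zero (g) : Ex h0 S 0 g = g [] := by
  simp only [Ex, historyPMF, tsum_pure_mul]

lemma Ex_succ (t : ℕ) (g) : Ex h0 S (t + 1) g =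
    Ex h0 S t (fun h => (n : ℝ≥0∞)⁻¹ *
      ∑ u : Fin n, ∑ W, S h (colOne n u) W * g ((colOne n u, W) :: h)) := by
  simp only [Ex, historyPMF, tsum_bind_mul, tsum_map_mul]
  congr 1; ext h; congr 1
  rw [tsum_fintype, Finset.mul_sum]
  rw [← (colOne n).sum_comp]
  refine Finset.sum_congr rfl fun u _ => ?_
  rw [tsum_fintype, PMF.uniformOfFintype_apply, card_col_one]

lemma Ex_mono (t : ℕ) {g g' : List (Step n 1 s) → ℝ≥0∞} (h : ∀ x, g x ≤ g' x) :
    Ex h0 S t g ≤ Ex h0 S t g' :=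
  ENNReal.tsum_le_tsum fun x => by gcongr; exact h x

lemma Ex_add (t : ℕ) (g g' : List (Step n 1 s) → ℝ≥0∞) :
    Ex h0 S t (fun h => g h + g' h) = Ex h0 S t g + Ex h0 S t g' := by
  simp only [Ex, mul_add, ENNReal.tsum_add]

lemma Ex_mul (t : ℕ) (c : ℝ≥0∞) (g : List (Step n 1 s) → ℝ≥0∞) :
    Ex h0 S t (fun h => c * g h) = c * Ex h0 S t g := by
  simp only [Ex, ← ENNReal.tsum_mul_left]
  congr 1; ext h; ring

lemma Ex_const (t : ℕ) (c : ℝ≥0∞) : Ex h0 S t (fun _ => c) = c := by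
  simp [Ex, ENNReal.tsum_mul_right, PMF.tsum_coe]

lemma prob_eq_Ex (t : ℕ) (Q : Set (List (Step n 1 s))) :
    (historyPMF h0 S t).toOuterMeasure Q = Ex h0 S t (Q.indicator 1) := by
  rw [PMF.toOuterMeasure_apply, Ex]
  congr 1; ext h
  by_cases hh : h ∈ Q <;> simp [hh]

lemma length_of_mem_support (t : ℕ) : ∀ h, historyPMF h0 S t h ≠ 0 → h.length = t := by
  induction t with
  | zero =>
    intro h hh
    have : h ∈ (PMF.pure ([] : List (Step n 1 s))).support := hh
    simp at this
    simp [this]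
  | succ t ih =>
    intro h hh
    have : h ∈ (historyPMF h0 S (t+1)).support := hh
    simp only [historyPMF, PMF.mem_support_bind_iff, PMF.mem_support_map_iff] at this
    obtain ⟨h', hh', U, -, W, -, rfl⟩ := this
    simp [ih h' hh']

lemma Ex_congr_length (t : ℕ) {g g' : List (Step n 1 s) → ℝ≥0∞}
    (h : ∀ x, x.length = t → g x = g' x) : Ex h0 S t g = Ex h0 S t g' := by
  refine tsum_congr fun x => ?_
  by_cases hx : historyPMF h0 S t x = 0
  · simp [hx]
  · rw [h x (length_of_mem_support h0 S t x hx)]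

end Ex

/-- Optimal failure probability with `T` rounds to go. -/
noncomputable def failVal {n s : ℕ} (Q : Set (List (Step n 1 s))) :
    ℕ → List (Step n 1 s) → ℝ≥0∞
  | 0, h => Qᶜ.indicator 1 h
  | T + 1, h => (n : ℝ≥0∞)⁻¹ * ∑ u : Fin n, ⨅ W, failVal Q T ((colOne n u, W) :: h)

lemma exists_strategy {n s : ℕ} (hn : s - 1 ≤ n) (h0 : Nonempty (Col n 1))
    (Q : Set (List (Step n 1 s))) (T : ℕ) :
    ∃ S : Strategy n 1 s, Ex h0 S T (Qᶜ.indicator 1) = failVal Q T [] := by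
  have := col_nonempty hn
  have key : ∀ (h : List (Step n 1 s)) (U : Col n 1), ∃ W : Col n (s - 1),
      failVal Q (T - 1 - h.length) ((U, W) :: h) =
        ⨅ W, failVal Q (T - 1 - h.length) ((U, W) :: h) := fun h U =>
    exists_eq_ciInf_of_finite
  choose W hW using key
  let S : Strategy n 1 s := fun h U => PMF.pure (W h U)
  refine ⟨S, ?_⟩
  have main : ∀ i, i ≤ T → Ex h0 S i (fun h => failVal Q (T - h.length) h) = failVal Q T [] := by
    intro i
    induction i with
    | zero => intro _; simp [Ex_zero]
    | succ i ih =>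
      intro hi
      rw [← ih (by omega), Ex_succ]
      refine Ex_congr_length h0 S i fun h hl => ?_
      have e : T - h.length = (T - 1 - h.length) + 1 := by omega
      rw [e, failVal]
      congr 1
      refine Finset.sum_congr rfl fun u _ => ?_
      rw [← hW h (colOne n u), ← tsum_fintype (L := .unconditional _), tsum_pure_mul]
      congr 1
      simp; omega
  rw [← main T le_rfl]
  refine Ex_congr_length h0 S T fun h hl => ?_
  simp [hl, failVal]

lemma failVal_compl_prob {n s : ℕ} (h0 : Nonempty (Col n 1)) (S : Strategy n 1 s)
    (Q : Set (List (Step n 1 s))) (T : ℕ) :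
    Ex h0 S T (Q.indicator 1) + Ex h0 S T (Qᶜ.indicator 1) = 1 := by
  rw [← Ex_add, ← Ex_const h0 S T 1]
  congr 1; ext h
  by_cases hh : h ∈ Q <;> simp [hh]

end SemiRandomHypergraph
namespace SemiRandomHypergraph

lemma inv_mul_sum_le {n : ℕ} (f : Fin n → ℝ≥0∞) (c : ℝ≥0∞) (h : ∀ u, f u ≤ c) :
    (n : ℝ≥0∞)⁻¹ * ∑ u, f u ≤ c := by
  calc (n : ℝ≥0∞)⁻¹ * ∑ u, f u ≤ (n : ℝ≥0∞)⁻¹ * (n * c) := by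
        gcongr
        calc ∑ u, f u ≤ ∑ _u : Fin n, c := Finset.sum_le_sum fun u _ => h u
          _ = n * c := by simp
    _ = ((n : ℝ≥0∞)⁻¹ * n) * c := by ring
    _ ≤ 1 * c := by gcongr; exact ENNReal.inv_mul_le_one _
    _ = c := one_mul c

lemma failVal_le_one {n s : ℕ} (hn : s - 1 ≤ n) (Q : Set (List (Step n 1 s))) (T : ℕ) :
    ∀ h, failVal Q T h ≤ 1 := by
  have := col_nonempty hn
  induction T with
  | zero => intro h; simp only [failVal]; by_cases hh : h ∈ Q <;> simp [hh]
  | succ T ih =>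
    intro h
    exact inv_mul_sum_le _ _ fun u => (iInf_le _ this.some).trans (ih _)

lemma failVal_comp {n s : ℕ} (hn : s - 1 ≤ n) {Q Q' : Set (List (Step n 1 s))} {T1 T2 : ℕ}
    {δ : ℝ≥0∞} (h2 : ∀ h ∈ Q, failVal Q' T2 h ≤ δ) :
    ∀ h, failVal Q' (T1 + T2) h ≤ failVal Q T1 h + δ := by
  have := col_nonempty hn
  induction T1 with
  | zero =>
    intro h
    rw [zero_add]
    by_cases hh : h ∈ Q
    · exact (h2 h hh).trans le_add_self
    · simp only [failVal]
      rw [Set.indicator_of_mem (by simpa using hh)]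
      exact (failVal_le_one hn _ _ _).trans (by simp)
  | succ T ih =>
    intro h
    rw [show T + 1 + T2 = (T + T2) + 1 by ring]
    simp only [failVal]
    calc _ ≤ (n : ℝ≥0∞)⁻¹ * ∑ u : Fin n,
          ((⨅ W, failVal Q T ((colOne n u, W) :: h)) + δ) := by
          gcongr with u
          rw [ENNReal.iInf_add]
          exact iInf_mono fun W => ih _
      _ = (n : ℝ≥0∞)⁻¹ * ∑ u : Fin n, (⨅ W, failVal Q T ((colOne n u, W) :: h))
          + (n : ℝ≥0∞)⁻¹ * ∑ u : Fin n, δ := by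
          rw [Finset.sum_add_distrib, mul_add]
      _ ≤ _ := by gcongr; exact inv_mul_sum_le _ _ fun _ => le_rfl

lemma failVal_mono {n s : ℕ} {Q Q' : Set (List (Step n 1 s))} (hQ : Q ⊆ Q') (T : ℕ) :
    ∀ h, failVal Q' T h ≤ failVal Q T h := by
  induction T with
  | zero =>
    intro h; simp only [failVal]
    by_cases hh : h ∈ Q
    · simp [hh, hQ hh]
    · by_cases hh' : h ∈ Q' <;> simp [hh, hh']
  | succ T ih =>
    intro h
    simp only [failVal]
    gcongr
    exact ih _

lemma failVal_potential {n s : ℕ} (hn : 0 < n) {Q I : Set (List (Step n 1 s))}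
    (W : Col n (s - 1)) (Φ : List (Step n 1 s) → ℝ) (hΦ : ∀ h, 0 ≤ Φ h) (ρ : ℝ) (hρ : 0 ≤ ρ)
    (hI : ∀ h ∈ I, ∀ u, (colOne n u, W) :: h ∈ I)
    (hstep : ∀ h ∈ I, ∑ u, Φ ((colOne n u, W) :: h) ≤ n * ρ * Φ h)
    (hQ : ∀ h ∈ I, h ∉ Q → 1 ≤ Φ h) (T : ℕ) :
    ∀ h ∈ I, failVal Q T h ≤ ENNReal.ofReal (ρ ^ T * Φ h) := by
  induction T with
  | zero =>
    intro h hh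
    simp only [failVal]
    by_cases hq : h ∈ Q
    · simp [hq]
    · simp [hq]; exact hQ h hh hq
  | succ T ih =>
    intro h hh
    simp only [failVal]
    calc _ ≤ (n : ℝ≥0∞)⁻¹ * ∑ u : Fin n, ENNReal.ofReal (ρ ^ T * Φ ((colOne n u, W) :: h)) := by
          gcongr with u
          exact (iInf_le _ W).trans (ih _ (hI h hh u))
      _ = (n : ℝ≥0∞)⁻¹ * ENNReal.ofReal (∑ u : Fin n, ρ ^ T * Φ ((colOne n u, W) :: h)) := by
          rw [ENNReal.ofReal_sum_of_nonneg]
          intro u _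
          exact mul_nonneg (by positivity) (hΦ _)
      _ ≤ (n : ℝ≥0∞)⁻¹ * ENNReal.ofReal (n * (ρ ^ (T + 1) * Φ h)) := by
          gcongr
          rw [← Finset.mul_sum]
          calc _ ≤ ρ ^ T * (n * ρ * Φ h) := by gcongr; exact hstep h hh
            _ = _ := by ring
      _ = _ := by
          rw [ENNReal.ofReal_mul (by positivity), ← mul_assoc, ENNReal.ofReal_natCast,
            ENNReal.inv_mul_cancel (by simpa using hn.ne') (by simp), one_mul]

section Stage
variable {V : Type*} [Fintype V] [DecidableEq V] {n s : ℕ}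

open Classical in
/-- candidates for the image of `v` for which the edges in `F` have been built -/
noncomputable def Cand (φ : V ↪ Fin n) (S' : Finset V) (v : V) (F : Finset (Finset V))
    (h : List (Step n 1 s)) : Finset (Fin n) :=
  Finset.univ.filter fun u => u ∉ S'.map φ ∧ ∀ e ∈ F, ∃ p ∈ h,
    ({u} : Multiset (Fin n)) + Multiset.map φ (e.erase v).val = p.1.1.val + p.2.1.val

lemma Cand_mono {φ : V ↪ Fin n} {S' : Finset V} {v : V} {F : Finset (Finset V)}
    {h h' : List (Step n 1 s)} (hh : h <:+ h') : Cand φ S' v F h ⊆ Cand φ S' v F h' := by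
  intro u
  simp only [Cand, Finset.mem_filter, Finset.mem_univ, true_and]
  rintro ⟨h1, h2⟩
  refine ⟨h1, fun e he => ?_⟩
  obtain ⟨p, hp, hp'⟩ := h2 e he
  exact ⟨p, hh.subset hp, hp'⟩

lemma Cand_anti {φ : V ↪ Fin n} {S' : Finset V} {v : V} {F F' : Finset (Finset V)}
    {h : List (Step n 1 s)} (hF : F ⊆ F') : Cand φ S' v F' h ⊆ Cand φ S' v F h := by
  intro u
  simp only [Cand, Finset.mem_filter, Finset.mem_univ, true_and]
  rintro ⟨h1, h2⟩
  exact ⟨h1, fun e he => h2 e (hF he)⟩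

lemma stage (hn : 0 < n) (φ : V ↪ Fin n) (S' : Finset V) (v : V) (F : Finset (Finset V))
    (e : Finset V) (hv : v ∈ e) (he : e.card = s) (b b' : ℝ)
    (hρ : 0 ≤ 1 - (b - b') / (2 * n)) (T : ℕ)
    (h0 : List (Step n 1 s)) (hb : b ≤ (Cand φ S' v F h0).card) :
    failVal {h | h0 <:+ h ∧ b' ≤ (Cand φ S' v (insert e F) h).card} T h0 ≤
      ENNReal.ofReal ((1 - (b - b') / (2 * n)) ^ T * (2 : ℝ) ^ b') := by
  classical
  let W : Col n (s - 1) := ⟨(e.erase v).map φ, by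
    rw [Finset.card_map, Finset.card_erase_of_mem hv, he]⟩
  let Φ : List (Step n 1 s) → ℝ := fun h =>
    if b' ≤ (Cand φ S' v (insert e F) h).card then 0 else
      (2 : ℝ) ^ (b' - (Cand φ S' v (insert e F) h).card)
  have hΦ : ∀ h, 0 ≤ Φ h := by
    intro h; simp only [Φ]; split_ifs <;> positivity
  have main := failVal_potential hn (I := {h | h0 <:+ h})
    (Q := {h | h0 <:+ h ∧ b' ≤ (Cand φ S' v (insert e F) h).card}) W Φ hΦ _ hρ
    (fun h hh u => List.IsSuffix.trans hh (List.suffix_cons _ _)) ?_ ?_ T h0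
    (List.suffix_refl _)
  · refine main.trans (ENNReal.ofReal_le_ofReal ?_)
    gcongr
    simp only [Φ]
    split_ifs
    · positivity
    · apply Real.rpow_le_rpow_of_exponent_le (by norm_num)
      simp
  · intro h hh
    have hmono : ∀ u, Cand φ S' v (insert e F) h ⊆
        Cand φ S' v (insert e F) ((colOne n u, W) :: h) := fun u =>
      Cand_mono (List.suffix_cons _ _)
    by_cases hc : b' ≤ (Cand φ S' v (insert e F) h).card
    · have : ∀ u, Φ ((colOne n u, W) :: h) = 0 := by
        intro u
        simp only [Φ]
        rw [if_pos]
        exact hc.trans (by exact_mod_cast Finset.card_le_card (hmono u))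
      simp only [this, Finset.sum_const_zero]
      exact mul_nonneg (mul_nonneg (by positivity) hρ) (hΦ h)
    · set A := Cand φ S' v F h \ Cand φ S' v (insert e F) h with hA
      have hΦh : Φ h = (2 : ℝ) ^ (b' - (Cand φ S' v (insert e F) h).card) := if_neg hc
      have hbound : ∀ u, Φ ((colOne n u, W) :: h) ≤ Φ h * (1 - if u ∈ A then 1 / 2 else 0) := by
        intro u
        by_cases hu : u ∈ A
        · have h1 : insert u (Cand φ S' v (insert e F) h) ⊆
              Cand φ S' v (insert e F) ((colOne n u, W) :: h) := by
            refine Finset.insert_subset ?_ (hmono u)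
            rw [hA, Finset.mem_sdiff] at hu
            have := Cand_mono (List.suffix_cons (colOne n u, W) h) hu.1
            simp only [Cand, Finset.mem_filter, Finset.mem_univ, true_and] at this ⊢
            refine ⟨this.1, fun f hf => ?_⟩
            rcases Finset.mem_insert.1 hf with rfl | hf
            · exact ⟨_, List.mem_cons_self, rfl⟩
            · exact this.2 f hf
          have h2 := Finset.card_le_card h1
          rw [Finset.card_insert_of_notMem (by rw [hA, Finset.mem_sdiff] at hu; exact hu.2)] at h2
          have h2' : ((Cand φ S' v (insert e F) h).card : ℝ) + 1 ≤
            (Cand φ S' v (insert e F) ((colOne n u, W) :: h)).card := by exact_mod_cast h2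
          rw [if_pos hu, hΦh]
          simp only [Φ]
          split_ifs
          · have : (0:ℝ) ≤ 1 - 1/2 := by norm_num
            positivity
          · calc _ ≤ (2 : ℝ) ^ (b' - (Cand φ S' v (insert e F) h).card - 1) := by
                  apply Real.rpow_le_rpow_of_exponent_le (by norm_num)
                  linarith
              _ = _ := by
                  rw [Real.rpow_sub_one (by norm_num)]; ring
        · rw [if_neg hu, hΦh]
          simp only [Φ]
          split_ifs
          · have : (0:ℝ) ≤ 1 - 0 := by norm_num
            positivity
          · rw [sub_zero, mul_one]
            apply Real.rpow_le_rpow_of_exponent_le (by norm_num)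
            have : ((Cand φ S' v (insert e F) h).card : ℝ) ≤
              (Cand φ S' v (insert e F) ((colOne n u, W) :: h)).card := by
              exact_mod_cast Finset.card_le_card (hmono u)
            linarith
      have hAc : b - b' ≤ A.card := by
        have h1 : A.card + (Cand φ S' v (insert e F) h).card = (Cand φ S' v F h).card :=
          Finset.card_sdiff_add_card_eq_card (Cand_anti (Finset.subset_insert _ _))
        have h2 : b ≤ (Cand φ S' v F h).card :=
          hb.trans (by exact_mod_cast Finset.card_le_card (Cand_mono hh))
        have h1' : (A.card : ℝ) + (Cand φ S' v (insert e F) h).card = (Cand φ S' v F h).card := by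
          exact_mod_cast h1
        push Not at hc
        linarith
      calc _ ≤ ∑ u, Φ h * (1 - if u ∈ A then (1 / 2 : ℝ) else 0) :=
            Finset.sum_le_sum fun u _ => hbound u
        _ = Φ h * (n - A.card / 2) := by
            rw [← Finset.mul_sum, Finset.sum_sub_distrib, ← Finset.sum_filter]
            simp
            ring_nf; simp
        _ ≤ Φ h * (n - (b - b') / 2) := by
            gcongr
        _ = _ := by
            have : (n : ℝ) ≠ 0 := by exact_mod_cast hn.ne'
            field_simp
  · intro h hh hq
    have : ¬ b' ≤ (Cand φ S' v (insert e F) h).card := fun h' => hq ⟨hh, h'⟩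
    simp only [Φ, if_neg this]
    apply Real.one_le_rpow (by norm_num)
    push Not at this
    linarith

/-- the numerical hypotheses -/
structure Num (n T : ℕ) (η : ℝ≥0∞) (b : ℕ → ℝ) (d m : ℕ) : Prop where
  b0 : b 0 ≤ (n : ℝ) - m
  pos : ∀ j ≤ d, 0 < b j
  rho : ∀ j < d, 0 ≤ 1 - (b j - b (j + 1)) / (2 * n)
  le : ∀ j < d, ENNReal.ofReal ((1 - (b j - b (j + 1)) / (2 * n)) ^ T * (2 : ℝ) ^ b (j + 1)) ≤ η

lemma chain (hn : 0 < n) (hs : s - 1 ≤ n) (φ : V ↪ Fin n) (S' : Finset V) (v : V) {T : ℕ}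
    {η : ℝ≥0∞} {b : ℕ → ℝ} {d : ℕ} (hnum : Num n T η b d (Fintype.card V))
    (h0 : List (Step n 1 s)) (F : Finset (Finset V)) :
    F.card ≤ d → (∀ e ∈ F, v ∈ e ∧ e.card = s) →
    failVal {h | h0 <:+ h ∧ b F.card ≤ (Cand φ S' v F h).card} (F.card * T) h0 ≤
      F.card * η := by
  classical
  induction F using Finset.induction_on with
  | empty =>
    intro _ _
    have : (b 0 : ℝ) ≤ (Cand φ S' v ∅ h0).card := by
      refine hnum.b0.trans ?_
      have h1 : (Cand φ S' v ∅ h0) = (S'.map φ)ᶜ := by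
        ext u; simp [Cand]
      rw [h1, Finset.card_compl, Finset.card_map, Fintype.card_fin]
      have : S'.card ≤ Fintype.card V := Finset.card_le_univ _
      have h2 : S'.card ≤ n := by
        have := Finset.card_le_univ (S'.map φ)
        simpa using this
      rw [Nat.cast_sub h2]
      have : (S'.card : ℝ) ≤ Fintype.card V := by exact_mod_cast this
      linarith
    simp [failVal, this]
  | insert e F heF ih =>
    intro hc hF
    have hcard := Finset.card_insert_of_notMem heF
    have ih' := ih (by omega) (fun f hf => hF f (Finset.mem_insert_of_mem hf))
    rw [hcard, Nat.add_mul, one_mul]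
    refine (failVal_comp hs (δ := η) ?_ h0).trans ((add_le_add_left ih' η).trans ?_)
    · rintro h ⟨hh, hb⟩
      have he := hF e (Finset.mem_insert_self _ _)
      refine (failVal_mono ?_ T h).trans ((stage hn φ S' v F e he.1 he.2 _ (b (F.card + 1))
        (hnum.rho F.card (by omega)) T h hb).trans (hnum.le F.card (by omega)))
      rintro h' ⟨h1, h2⟩
      exact ⟨hh.trans h1, h2⟩
    · push_cast; rw [add_mul, one_mul]

/-- `S` has been embedded -/
def Emb (E : Finset (Finset V)) (S : Finset V) : Set (List (Step n 1 s)) :=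
  {h | ∃ φ : V ↪ Fin n, ∀ e ∈ E, e ⊆ S → ∃ p ∈ h,
    Multiset.map φ e.val = p.1.1.val + p.2.1.val}

lemma vertex (hn : 0 < n) (hs : s - 1 ≤ n) (E : Finset (Finset V))
    (hunif : ∀ e ∈ E, e.card = s) (S : Finset V) (v : V) {T : ℕ}
    {η : ℝ≥0∞} {b : ℕ → ℝ} {d : ℕ} (hnum : Num n T η b d (Fintype.card V))
    (hd : (E.filter fun e => v ∈ e ∧ e ⊆ S).card ≤ d)
    (h0 : List (Step n 1 s)) (hE : h0 ∈ Emb (n := n) (s := s) E (S.erase v)) :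
    failVal (Emb E S) ((E.filter fun e => v ∈ e ∧ e ⊆ S).card * T) h0 ≤
      (E.filter fun e => v ∈ e ∧ e ⊆ S).card * η := by
  classical
  obtain ⟨φ, hφ⟩ := hE
  refine (failVal_mono ?_ _ _).trans (chain hn hs φ (S.erase v) v hnum h0 _ hd ?_)
  · rintro h ⟨hh, hb⟩
    have hpos := (hnum.pos _ hd).trans_le hb
    have : (Cand φ (S.erase v) v (E.filter fun e => v ∈ e ∧ e ⊆ S) h).Nonempty := by
      rw [← Finset.card_pos]; exact_mod_cast hpos
    obtain ⟨u, hu⟩ := this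
    simp only [Cand, Finset.mem_filter, Finset.mem_univ, true_and] at hu
    obtain ⟨hu1, hu2⟩ := hu
    let ψ : V ↪ Fin n := φ.trans (Equiv.swap (φ v) u).toEmbedding
    have hψv : ψ v = u := by simp [ψ]
    have hψ : ∀ y ∈ S, y ≠ v → ψ y = φ y := by
      intro y hy hyv
      simp only [ψ, Function.Embedding.trans_apply, Equiv.coe_toEmbedding]
      apply Equiv.swap_apply_of_ne_of_ne
      · exact fun h => hyv (φ.injective h)
      · rintro h
        apply hu1
        rw [Finset.mem_map]
        exact ⟨y, Finset.mem_erase.2 ⟨hyv, hy⟩, h⟩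
    refine ⟨ψ, fun e he heS => ?_⟩
    by_cases hve : v ∈ e
    · obtain ⟨p, hp, hp'⟩ := hu2 e ⟨he, hve, heS⟩
      refine ⟨p, hp, ?_⟩
      rw [← hp']
      conv_lhs => rw [← Finset.insert_erase hve]
      rw [Finset.insert_val_of_notMem (Finset.notMem_erase _ _), Multiset.map_cons, hψv]
      rw [Multiset.singleton_add]
      congr 1
      refine Multiset.map_congr rfl fun y hy => ?_
      have hy' : y ∈ e.erase v := hy
      rw [Finset.mem_erase] at hy'
      exact hψ y (heS hy'.2) hy'.1
    · obtain ⟨p, hp, hp'⟩ := hφ e he (Finset.subset_erase.2 ⟨heS, hve⟩)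
      refine ⟨p, hh.subset hp, ?_⟩
      rw [← hp']
      refine Multiset.map_congr rfl fun y hy => ?_
      exact hψ y (heS hy) (fun h => hve (h ▸ hy))
  · intro e he
    rw [Finset.mem_filter] at he
    exact ⟨he.2.1, hunif e he.1⟩

lemma upper (hn : 0 < n) (hs : s - 1 ≤ n) (hs0 : 0 < s) (hV : Fintype.card V ≤ n)
    (E : Finset (Finset V))
    (hunif : ∀ e ∈ E, e.card = s) {T : ℕ}
    {η : ℝ≥0∞} {b : ℕ → ℝ} {d : ℕ} (hnum : Num n T η b d (Fintype.card V))
    (hd : Degen E d) (S : Finset V) :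
    ∀ h0 : List (Step n 1 s),
    failVal (Emb E S) ((E.filter fun e => e ⊆ S).card * T) h0 ≤
      (E.filter fun e => e ⊆ S).card * η := by
  induction S using Finset.strongInduction with
  | H S ih =>
  intro h0
  rcases S.eq_empty_or_nonempty with rfl | hS
  · have h1 : (E.filter fun e => e ⊆ ∅) = ∅ := by
      rw [Finset.filter_eq_empty_iff]
      intro e he hee
      have := hunif e he
      rw [Finset.subset_empty.1 hee] at this
      simp at this; omega
    have h2 : h0 ∈ Emb (n := n) (s := s) E ∅ := by
      obtain ⟨φ⟩ : Nonempty (V ↪ Fin n) :=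
        Function.Embedding.nonempty_of_card_le (by simpa using hV)
      refine ⟨φ, fun e he hee => ?_⟩
      have : e ∈ (E.filter fun e => e ⊆ ∅) := Finset.mem_filter.2 ⟨he, hee⟩
      rw [h1] at this; simp at this
    rw [h1]
    simp [failVal, h2]
  · obtain ⟨v, hv, hdv⟩ := hd S hS
    have hcard : (E.filter fun e => e ⊆ S).card = (E.filter fun e => e ⊆ S.erase v).card
        + (E.filter fun e => v ∈ e ∧ e ⊆ S).card := by
      rw [← Finset.card_union_of_disjoint]
      · congr 1
        ext e
        simp only [Finset.mem_filter, Finset.mem_union, Finset.subset_erase]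
        tauto
      · rw [Finset.disjoint_left]
        intro e
        simp only [Finset.mem_filter, Finset.subset_erase]
        tauto
    rw [hcard, Nat.add_mul]
    refine (failVal_comp hs (fun h hh => vertex hn hs E hunif S v hnum hdv h hh) h0).trans ?_
    push_cast
    rw [add_mul]
    gcongr
    exact ih _ (Finset.erase_ssubset hv) h0

lemma tauQ_le (hn : 0 < n) (hs : s - 1 ≤ n) (hs0 : 0 < s) (hV : Fintype.card V ≤ n)
    (E : Finset (Finset V))
    (hunif : ∀ e ∈ E, e.card = s) {T : ℕ}
    {η : ℝ≥0∞} {b : ℕ → ℝ} {d : ℕ} (hnum : Num n T η b d (Fintype.card V))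
    (hd : Degen E d) (q : ℝ≥0∞) (hq : q + E.card * η ≤ 1) (hη : η ≠ ⊤) :
    tauQ 1 s E q n ≤ ((E.card * T : ℕ) : ℕ∞) := by
  have h0 := col_nonempty (n := n) (k := 1) hn
  have hU := upper hn hs hs0 hV E hunif hnum hd Finset.univ []
  obtain ⟨S, hS⟩ := exists_strategy hs h0 (Emb E Finset.univ) (E.card * T)
  simp only [Finset.subset_univ, Finset.filter_true] at hU
  refine (iInf_le _ S).trans (sInf_le ⟨_, rfl, ?_⟩)
  rw [probContains, dif_pos (show 1 ≤ n from hn)]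
  have e1 : {hist : List (Step n 1 s) | ContainsCopy E hist} = Emb E Finset.univ := by
    ext h; simp [ContainsCopy, Emb]
  rw [e1, prob_eq_Ex]
  have h1 := failVal_compl_prob h0 S (Emb E Finset.univ) (E.card * T)
  have h2 : Ex h0 S (E.card * T) ((Emb E Finset.univ)ᶜ.indicator 1) ≤ E.card * η := hS.trans_le hU
  have h3 : q + E.card * η ≤ Ex h0 S (E.card * T) ((Emb E Finset.univ).indicator 1)
      + E.card * η := by
    refine hq.trans (h1.symm.trans_le ?_)
    gcongr
  exact (ENNReal.add_le_add_iff_right (ENNReal.mul_ne_top (by simp) hη)).1 h3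

end Stage

end SemiRandomHypergraph
namespace SemiRandomHypergraph

section Lower
set_option linter.unusedSectionVars false
variable {V : Type*} [Fintype V] [DecidableEq V] {n s : ℕ}

/-- number of rounds in which the random vertex lies in the set `A` (depending on the past) -/
def cnt (A : List (Step n 1 s) → Finset (Fin n)) : List (Step n 1 s) → ℕ
  | [] => 0
  | p :: h => cnt A h + (p.1.1 ∩ A h).card

open Classical in
lemma Ex_cnt_le (h0 : Nonempty (Col n 1)) (S : Strategy n 1 s)
    (A : List (Step n 1 s) → Finset (Fin n))
    (G : Set (List (Step n 1 s))) (hG : ∀ p h, p :: h ∈ G → h ∈ G) (c : ℝ≥0∞) (t : ℕ)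
    (hA : ∀ i < t, Ex h0 S i (G.indicator fun h => ((A h).card : ℝ≥0∞)) ≤ c) :
    Ex h0 S t (G.indicator fun h => (cnt A h : ℝ≥0∞)) ≤ t * ((n : ℝ≥0∞)⁻¹ * c) := by
  induction t with
  | zero =>
    rw [Ex_zero]
    by_cases h : ([] : List (Step n 1 s)) ∈ G <;> simp [h, cnt]
  | succ t ih =>
    have ih' := ih fun i hi => hA i (by omega)
    have hAt := hA t (by omega)
    rw [Ex_succ]
    calc _ ≤ Ex h0 S t (fun h => G.indicator (fun h => (cnt A h : ℝ≥0∞)) h +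
          (n : ℝ≥0∞)⁻¹ * G.indicator (fun h => ((A h).card : ℝ≥0∞)) h) := by
          refine Ex_mono h0 S t fun h => ?_
          by_cases hh : h ∈ G
          · rw [Set.indicator_of_mem hh, Set.indicator_of_mem hh]
            have hu : ∀ u : Fin n, ∑ W, S h (colOne n u) W *
                G.indicator (fun h => (cnt A h : ℝ≥0∞)) ((colOne n u, W) :: h) ≤
                (cnt A h : ℝ≥0∞) + if u ∈ A h then 1 else 0 := by
              intro u
              calc _ ≤ ∑ W, S h (colOne n u) W * ((cnt A h : ℝ≥0∞) + if u ∈ A h then 1 else 0) := by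
                    gcongr with W
                    refine (Set.indicator_le_self _ _ _).trans ?_
                    simp only [cnt, colOne_val, Nat.cast_add]
                    gcongr
                    by_cases hu : u ∈ A h
                    · rw [Finset.singleton_inter_of_mem hu]; simp [hu]
                    · rw [Finset.singleton_inter_of_notMem hu]; simp
                _ = _ := by
                    rw [← Finset.sum_mul, ← tsum_fintype (L := .unconditional _),
                      PMF.tsum_coe, one_mul]
            calc _ ≤ (n : ℝ≥0∞)⁻¹ * ∑ u : Fin n,
                    ((cnt A h : ℝ≥0∞) + if u ∈ A h then 1 else 0) := by
                  gcongr with u; exact hu u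
              _ = (n : ℝ≥0∞)⁻¹ * ∑ u : Fin n, (cnt A h : ℝ≥0∞) +
                    (n : ℝ≥0∞)⁻¹ * (A h).card := by
                  rw [Finset.sum_add_distrib, mul_add]
                  simp
              _ ≤ _ := by
                  gcongr
                  exact inv_mul_sum_le _ _ fun _ => le_rfl
          · have : ∀ u W, ((colOne n u, W) :: h) ∉ G := fun u W h' => hh (hG _ _ h')
            simp [this]
      _ = Ex h0 S t (G.indicator (fun h => (cnt A h : ℝ≥0∞))) +
          (n : ℝ≥0∞)⁻¹ * Ex h0 S t (G.indicator (fun h => ((A h).card : ℝ≥0∞))) := by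
          rw [Ex_add, Ex_mul]
      _ ≤ t * ((n : ℝ≥0∞)⁻¹ * c) + (n : ℝ≥0∞)⁻¹ * c := by gcongr
      _ = _ := by push_cast; ring

/-- Iterating the previous bound. -/
lemma Ex_iter (h0 : Nonempty (Col n 1)) (S : Strategy n 1 s)
    (A : ℕ → List (Step n 1 s) → Finset (Fin n))
    (G : Set (List (Step n 1 s))) (hG : ∀ p h, p :: h ∈ G → h ∈ G) (M d : ℕ)
    (hA : ∀ j < d, ∀ h ∈ G, (A (j + 1) h).card ≤ M * cnt (A j) h) (j : ℕ) (hj : j ≤ d) :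
    ∀ t, Ex h0 S t (G.indicator fun h => ((A j h).card : ℝ≥0∞)) ≤
      n * ((M : ℝ≥0∞) * t * (n : ℝ≥0∞)⁻¹) ^ j := by
  induction j with
  | zero =>
    intro t
    rw [pow_zero, mul_one]
    calc _ ≤ Ex h0 S t (fun _ => (n : ℝ≥0∞)) := by
          refine Ex_mono h0 S t fun h => ?_
          refine (Set.indicator_le_self _ _ _).trans ?_
          have := Finset.card_le_univ (A 0 h)
          rw [Fintype.card_fin] at this
          exact_mod_cast this
      _ = _ := Ex_const _ _ _ _
  | succ j ih =>
    intro t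
    have ih' := ih (by omega)
    have h1 := Ex_cnt_le h0 S (A j) G hG (n * ((M : ℝ≥0∞) * t * (n : ℝ≥0∞)⁻¹) ^ j) t
      (fun i hi => (ih' i).trans (by gcongr))
    calc _ ≤ Ex h0 S t (fun h => (M : ℝ≥0∞) * G.indicator (fun h => (cnt (A j) h : ℝ≥0∞)) h) := by
          refine Ex_mono h0 S t fun h => ?_
          by_cases hh : h ∈ G
          · simp only [Set.indicator_of_mem hh]
            exact_mod_cast hA j (by omega) h hh
          · simp [hh]
      _ = (M : ℝ≥0∞) * Ex h0 S t (G.indicator (fun h => (cnt (A j) h : ℝ≥0∞))) := Ex_mul _ _ _ _ _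
      _ ≤ (M : ℝ≥0∞) * (t * ((n : ℝ≥0∞)⁻¹ * (n * ((M : ℝ≥0∞) * t * (n : ℝ≥0∞)⁻¹) ^ j))) := by
          gcongr
      _ = _ := by ring

/-- number of times `u` was hit -/
def hits (h : List (Step n 1 s)) (u : Fin n) : ℕ := h.countP fun p => u ∈ p.1.1

/-- vertices hit at least `j` times -/
def hitSet (j : ℕ) (h : List (Step n 1 s)) : Finset (Fin n) :=
  Finset.univ.filter fun u => j ≤ hits h u

lemma mem_hitSet {j : ℕ} {h : List (Step n 1 s)} {u : Fin n} :
    u ∈ hitSet j h ↔ j ≤ hits h u := by simp [hitSet]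

lemma hitSet_card_le (j : ℕ) (h : List (Step n 1 s)) :
    (hitSet (j + 1) h).card ≤ 1 * cnt (hitSet j) h := by
  rw [one_mul]
  induction h with
  | nil => simp [hitSet, hits, cnt]
  | cons p h ih =>
    have hsub : hitSet (j + 1) (p :: h) ⊆ hitSet (j + 1) h ∪ (p.1.1 ∩ hitSet j h) := by
      intro u
      simp only [Finset.mem_union, mem_hitSet, hits, Finset.mem_inter, List.countP_cons]
      intro hu
      by_cases hp : u ∈ p.1.1
      · simp [hp] at hu
        right; exact ⟨hp, hu⟩
      · simp [hp] at hu
        left; exact hu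
    exact (Finset.card_le_card hsub).trans ((Finset.card_union_le _ _).trans (by
      simp only [cnt]; omega))

/-- all vertices hit fewer than `d` times -/
def GoodH (d : ℕ) : Set (List (Step n 1 s)) := {h | ∀ u, hits h u < d}

lemma GoodH_tail (d : ℕ) (p : Step n 1 s) (h) (hh : p :: h ∈ GoodH d) : h ∈ GoodH d := by
  intro u
  have := hh u
  simp only [hits, List.countP_cons] at this
  simp only [hits]
  omega

/-- vertices chosen in a round where `u` was hit -/
def outN (h : List (Step n 1 s)) (u : Fin n) : Finset (Fin n) :=
  (h.filter fun p => u ∈ p.1.1).toFinset.biUnion fun p => p.2.1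

lemma outN_card {d : ℕ} {h : List (Step n 1 s)} (hh : h ∈ GoodH d) (u : Fin n) :
    (outN h u).card ≤ d * s := by
  have h1 : (h.filter fun p => u ∈ p.1.1).toFinset.card ≤ d := by
    refine (List.toFinset_card_le _).trans ?_
    have := hh u
    rw [hits, List.countP_eq_length_filter] at this
    exact this.le
  refine (Finset.card_biUnion_le_card_mul _ _ s ?_).trans (by gcongr)
  intro p _
  rw [p.2.2]; omega

lemma mem_outN {h : List (Step n 1 s)} {u w : Fin n} :
    w ∈ outN h u ↔ ∃ p ∈ h, u ∈ p.1.1 ∧ w ∈ p.2.1 := by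
  simp [outN, and_assoc]

/-- vertices reachable in at most `i` steps -/
def reach (h : List (Step n 1 s)) : ℕ → Fin n → Finset (Fin n)
  | 0, u => {u}
  | i + 1, u => insert u ((outN h u).biUnion (reach h i))

lemma reach_card {d : ℕ} {h : List (Step n 1 s)} (hh : h ∈ GoodH d) (i : ℕ) (u : Fin n) :
    (reach h i u).card ≤ (1 + d * s) ^ i := by
  induction i generalizing u with
  | zero => simp [reach]
  | succ i ih =>
    simp only [reach]
    refine (Finset.card_insert_le _ _).trans ?_
    have h1 := Finset.card_biUnion_le_card_mul (outN h u) (reach h i) _ (fun x _ => ih x)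
    have h2 := outN_card hh u
    have h3 : 1 ≤ (1 + d * s) ^ i := Nat.one_le_pow _ _ (by omega)
    calc _ ≤ (d * s) * (1 + d * s) ^ i + (1 + d * s) ^ i := by
          refine Nat.add_le_add (h1.trans ?_) h3
          exact Nat.mul_le_mul_right _ h2
      _ = _ := by ring

/-- the relation on `V` induced by the history -/
def Rel (φ : V ↪ Fin n) (h : List (Step n 1 s)) (y y' : V) : Prop :=
  ∃ p ∈ h, φ y ∈ p.1.1 ∧ φ y' ∈ p.2.1

/-- bounded-length reachability -/
def RB {α : Type*} (R : α → α → Prop) (x : α) : ℕ → α → Prop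
  | 0, y => y = x
  | i + 1, y => y = x ∨ ∃ z, R y z ∧ RB R x i z

lemma RB_succ {α : Type*} {R : α → α → Prop} {x : α} (i : ℕ) :
    ∀ y, RB R x i y → RB R x (i + 1) y := by
  induction i with
  | zero => intro y h; exact Or.inl h
  | succ i ih =>
    rintro y (h | ⟨z, h1, h2⟩)
    · exact Or.inl h
    · exact Or.inr ⟨z, h1, ih z h2⟩

lemma RB_of_rtg {R : V → V → Prop} {x y : V} (h : Relation.ReflTransGen R y x) :
    RB R x (Fintype.card V) y := by
  classical
  have key : ∀ i, (∀ y, RB R x (i + 1) y → RB R x i y) ∨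
      i + 1 ≤ (Finset.univ.filter fun y => RB R x i y).card := by
    intro i
    induction i with
    | zero =>
      right
      rw [zero_add, Finset.one_le_card]
      exact ⟨x, Finset.mem_filter.2 ⟨Finset.mem_univ _, rfl⟩⟩
    | succ i ih =>
      rcases ih with ih | ih
      · left
        rintro y (h | ⟨z, h1, h2⟩)
        · exact Or.inl h
        · exact Or.inr ⟨z, h1, ih z h2⟩
      · by_cases hs : ∀ y, RB R x (i + 1) y → RB R x i y
        · left
          rintro y (h | ⟨z, h1, h2⟩)
          · exact Or.inl h
          · exact Or.inr ⟨z, h1, hs z h2⟩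
        · right
          push Not at hs
          obtain ⟨y, hy1, hy2⟩ := hs
          refine Nat.lt_of_le_of_lt ih (Finset.card_lt_card ?_)
          rw [Finset.ssubset_iff_of_subset]
          · exact ⟨y, by simpa using hy1, by simpa using hy2⟩
          · intro z hz
            simp only [Finset.mem_filter, Finset.mem_univ, true_and] at hz ⊢
            exact RB_succ i z hz
  have hstab : ∀ y, RB R x (Fintype.card V + 1) y → RB R x (Fintype.card V) y := by
    rcases key (Fintype.card V) with h | h
    · exact h
    · have := Finset.card_le_univ (Finset.univ.filter fun y => RB R x (Fintype.card V) y)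
      omega
  induction h using Relation.ReflTransGen.head_induction_on with
  | refl =>
    cases hc : Fintype.card V with
    | zero => rfl
    | succ k => exact Or.inl rfl
  | head h1 _ ih => exact hstab _ (Or.inr ⟨_, h1, ih⟩)

lemma mem_reach_of_RB {φ : V ↪ Fin n} {h : List (Step n 1 s)} {x : V} (i : ℕ) :
    ∀ y, RB (Rel φ h) x i y → φ x ∈ reach h i (φ y) := by
  induction i with
  | zero => rintro y rfl; simp [reach]
  | succ i ih =>
    rintro y (rfl | ⟨z, ⟨p, hp, h1, h2⟩, h3⟩)
    · simp [reach]
    · simp only [reach, Finset.mem_insert, Finset.mem_biUnion]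
      right
      exact ⟨φ z, mem_outN.2 ⟨p, hp, h1, h2⟩, ih z h3⟩

lemma Rel_mono {φ : V ↪ Fin n} {h h' : List (Step n 1 s)} (hh : h <:+ h') {y z : V}
    (hr : Rel φ h y z) : Rel φ h' y z := by
  obtain ⟨p, hp, h1⟩ := hr
  exact ⟨p, hh.subset hp, h1⟩

/-- The edge `e` is realised with its random vertex in `φ D`. -/
def Rl (φ : V ↪ Fin n) (D : Finset V) (h : List (Step n 1 s)) (e : Finset V) : Prop :=
  ∃ p ∈ h, Multiset.map φ e.val = p.1.1.val + p.2.1.val ∧ p.1.1 ⊆ D.map φ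

open Classical in
/-- edges meeting `D` which are missing -/
noncomputable def miss (E : Finset (Finset V)) (φ : V ↪ Fin n) (D : Finset V)
    (h : List (Step n 1 s)) : Finset (Finset V) :=
  E.filter fun e => ¬ Disjoint e D ∧ ¬ Rl φ D h e

open Classical in
/-- the dangerous vertices -/
noncomputable def Bad (E : Finset (Finset V)) (S : Finset V) (k : ℕ) (h : List (Step n 1 s)) :
    Finset (Fin n) :=
  Finset.univ.filter fun w => ∃ (φ : V ↪ Fin n) (D : Finset V) (x : V), D ⊆ S ∧ x ∈ D ∧ φ x = w ∧
    (∀ y ∈ D, Relation.ReflTransGen (Rel φ h) y x) ∧ (miss E φ D h).card ≤ k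

lemma edge_closed {φ : V ↪ Fin n} {h : List (Step n 1 s)} {p : Step n 1 s} (hp : p ∈ h)
    {e : Finset V} (he : Multiset.map φ e.val = p.1.1.val + p.2.1.val) {y y' x : V}
    (hy : y ∈ e) (hr : Relation.ReflTransGen (Rel φ h) y x) (hy' : φ y' ∈ p.1.1) :
    Relation.ReflTransGen (Rel φ h) y' x := by
  have h1 : φ y ∈ p.1.1.val + p.2.1.val := by
    rw [← he]; exact Multiset.mem_map_of_mem _ hy
  rcases Multiset.mem_add.1 h1 with h1 | h1
  · have h1 : φ y ∈ p.1.1 := h1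
    have : φ y = φ y' := Finset.card_le_one.1 p.1.2.le _ h1 _ hy'
    rw [← φ.injective this]; exact hr
  · exact Relation.ReflTransGen.head ⟨p, hp, hy', h1⟩ hr

/-- deterministic key step, list induction -/
lemma key_step (E : Finset (Finset V)) (S : Finset V) (k : ℕ)
    (φ : V ↪ Fin n) (D : Finset V) (hD : D ⊆ S)
    (h : List (Step n 1 s)) (hk : (miss E φ D h).card ≤ k)
    (hne : ∃ e ∈ E, ¬ Disjoint e D ∧ Rl φ D h e) :
    ∃ (p : Step n 1 s) (h' : List (Step n 1 s)) (z : V), p :: h' <:+ h ∧ z ∈ D ∧ φ z ∈ p.1.1 ∧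
      φ z ∈ Bad E S (k + 1) h' := by
  classical
  induction h with
  | nil =>
    obtain ⟨e, _, _, p, hp, _⟩ := hne
    simp at hp
  | cons p h ih =>
    by_cases hsame : ∀ e ∈ E, ¬ Disjoint e D → Rl φ D (p :: h) e → Rl φ D h e
    · obtain ⟨p', h', z, h1, h2⟩ := ih (by
        refine (Finset.card_le_card ?_).trans hk
        intro e
        simp only [miss, Finset.mem_filter]
        rintro ⟨a, b, c⟩
        exact ⟨a, b, fun h' => c (hsame e a b h')⟩) (by
        obtain ⟨e, a, b, c⟩ := hne
        exact ⟨e, a, b, hsame e a b c⟩)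
      exact ⟨p', h', z, h1.trans (List.suffix_cons _ _), h2⟩
    · push Not at hsame
      obtain ⟨e0, he0, hdis, hr, hnr⟩ := hsame
      have hp0 : Multiset.map φ e0.val = p.1.1.val + p.2.1.val ∧ p.1.1 ⊆ D.map φ := by
        obtain ⟨p', hp', hh⟩ := hr
        rcases List.mem_cons.1 hp' with rfl | hp'
        · exact hh
        · exact absurd ⟨p', hp', hh⟩ hnr
      obtain ⟨u, hu⟩ := exists_colOne p.1
      have hup : u ∈ p.1.1 := by rw [hu, colOne_val]; simp
      obtain ⟨z, hz, hzu⟩ := Finset.mem_map.1 (hp0.2 hup)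
      rw [← hzu] at hup
      refine ⟨p, h, z, List.suffix_refl _, hz, hup, ?_⟩
      let A := D.filter fun y => Relation.ReflTransGen (Rel φ h) y z
      simp only [Bad, Finset.mem_filter, Finset.mem_univ, true_and]
      refine ⟨φ, A, z, (Finset.filter_subset _ _).trans hD, ?_, rfl, ?_, ?_⟩
      · exact Finset.mem_filter.2 ⟨hz, Relation.ReflTransGen.refl⟩
      · intro y hy
        exact (Finset.mem_filter.1 hy).2
      · have hsub : miss E φ A h ⊆ insert e0 (miss E φ D (p :: h)) := by
          intro e he
          simp only [miss, Finset.mem_filter] at he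
          obtain ⟨heE, heA, hen⟩ := he
          rw [Finset.mem_insert]
          by_cases hee : e = e0
          · exact Or.inl hee
          right
          simp only [miss, Finset.mem_filter]
          have heD : ¬ Disjoint e D := fun hd => heA (hd.mono_right (Finset.filter_subset _ _))
          refine ⟨heE, heD, ?_⟩
          rintro ⟨p', hp', h1, h2⟩
          rcases List.mem_cons.1 hp' with rfl | hp'
          · apply hee
            have := h1.trans hp0.1.symm
            exact Finset.val_injective (Multiset.map_injective φ.injective this)
          · apply hen
            refine ⟨p', hp', h1, ?_⟩
            intro w hw
            obtain ⟨y', hy', hyw⟩ := Finset.mem_map.1 (h2 hw)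
            rw [Finset.mem_map]
            refine ⟨y', ?_, hyw⟩
            rw [Finset.not_disjoint_iff] at heA
            obtain ⟨y, hy, hyA⟩ := heA
            refine Finset.mem_filter.2 ⟨hy', ?_⟩
            exact edge_closed hp' h1 hy (Finset.mem_filter.1 hyA).2 (by rw [hyw]; exact hw)
        exact (Finset.card_le_card hsub).trans ((Finset.card_insert_le _ _).trans (by omega))

/-- set of hit vertices lying in `A` of the past -/
def hitIn (A : List (Step n 1 s) → Finset (Fin n)) : List (Step n 1 s) → Finset (Fin n)
  | [] => ∅
  | p :: h => hitIn A h ∪ (p.1.1 ∩ A h)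

lemma hitIn_card (A : List (Step n 1 s) → Finset (Fin n)) (h : List (Step n 1 s)) :
    (hitIn A h).card ≤ cnt A h := by
  induction h with
  | nil => simp [hitIn, cnt]
  | cons p h ih =>
    simp only [hitIn, cnt]
    exact (Finset.card_union_le _ _).trans (by omega)

lemma mem_hitIn {A : List (Step n 1 s) → Finset (Fin n)} {h h' : List (Step n 1 s)}
    {p : Step n 1 s} (hh : p :: h' <:+ h) {u : Fin n} (hu : u ∈ p.1.1) (hA : u ∈ A h') :
    u ∈ hitIn A h := by
  induction h with
  | nil => simp at hh
  | cons p0 h ih =>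
    rcases List.suffix_cons_iff.1 hh with h1 | h1
    · obtain ⟨rfl, rfl⟩ := List.cons.inj h1
      simp [hitIn, hu, hA]
    · simp only [hitIn, Finset.mem_union]
      exact Or.inl (ih h1)

lemma Bad_card_le (E : Finset (Finset V)) (S : Finset V) {d k : ℕ} (hk : k < d)
    (hS : ∀ v ∈ S, d ≤ (E.filter fun e => v ∈ e).card)
    (h : List (Step n 1 s)) (hG : h ∈ GoodH d) :
    (Bad E S k h).card ≤ (1 + d * s) ^ (Fintype.card V) * cnt (Bad E S (k + 1)) h := by
  classical
  have hsub : Bad E S k h ⊆ (hitIn (Bad E S (k + 1)) h).biUnion (reach h (Fintype.card V)) := by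
    intro w hw
    simp only [Bad, Finset.mem_filter, Finset.mem_univ, true_and] at hw
    obtain ⟨φ, D, x, hD, hx, rfl, hreach, hmiss⟩ := hw
    have hne : ∃ e ∈ E, ¬ Disjoint e D ∧ Rl φ D h e := by
      by_contra hcon
      push Not at hcon
      have : (E.filter fun e => x ∈ e) ⊆ miss E φ D h := by
        intro e he
        rw [Finset.mem_filter] at he
        have hd : ¬ Disjoint e D := Finset.not_disjoint_iff.2 ⟨x, he.2, hx⟩
        exact Finset.mem_filter.2 ⟨he.1, hd, hcon e he.1 hd⟩
      have h1 := Finset.card_le_card this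
      have h2 := hS x (hD hx)
      omega
    obtain ⟨p, h', z, h1, h2, h3, h4⟩ := key_step E S k φ D hD h hmiss hne
    rw [Finset.mem_biUnion]
    exact ⟨φ z, mem_hitIn h1 h3 h4, mem_reach_of_RB _ _ (RB_of_rtg (hreach z h2))⟩
  refine (Finset.card_le_card hsub).trans ?_
  refine (Finset.card_biUnion_le_card_mul _ _ _ fun u _ => reach_card hG _ u).trans ?_
  rw [mul_comm]
  gcongr
  exact hitIn_card _ _

lemma Bad_zero_of_copy (E : Finset (Finset V)) (S : Finset V) (hS : S.Nonempty)
    (h : List (Step n 1 s)) (hc : ContainsCopy E h) :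
    (Bad (E.filter fun e => e ⊆ S) S 0 h).Nonempty := by
  classical
  obtain ⟨φ, hφ⟩ := hc
  obtain ⟨x, hx⟩ := hS
  let D := S.filter fun y => Relation.ReflTransGen (Rel φ h) y x
  refine ⟨φ x, ?_⟩
  simp only [Bad, Finset.mem_filter, Finset.mem_univ, true_and]
  refine ⟨φ, D, x, Finset.filter_subset _ _, Finset.mem_filter.2 ⟨hx, .refl⟩, rfl,
    fun y hy => (Finset.mem_filter.1 hy).2, ?_⟩
  rw [Nat.le_zero, Finset.card_eq_zero, miss, Finset.filter_eq_empty_iff]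
  rintro e he ⟨hd, hn⟩
  rw [Finset.mem_filter] at he
  obtain ⟨p, hp, hpe⟩ := hφ e he.1
  apply hn
  refine ⟨p, hp, hpe, ?_⟩
  intro w hw
  have h1 : w ∈ Multiset.map φ e.val := by
    rw [hpe]; exact Multiset.mem_add.2 (Or.inl hw)
  obtain ⟨y', hy', rfl⟩ := Multiset.mem_map.1 h1
  rw [Finset.not_disjoint_iff] at hd
  obtain ⟨y, hy, hyD⟩ := hd
  refine Finset.mem_map_of_mem _ (Finset.mem_filter.2 ⟨he.2 hy', ?_⟩)
  exact edge_closed hp hpe hy (Finset.mem_filter.1 hyD).2 hw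

lemma prob_le (hn : 1 ≤ n) (E : Finset (Finset V)) (S : Finset V) (hSn : S.Nonempty) {d : ℕ}
    (hS : ∀ v ∈ S, d ≤ (E.filter fun e => v ∈ e ∧ e ⊆ S).card) (St : Strategy n 1 s) (t : ℕ) :
    probContains n 1 s E St t ≤
      n * ((1 : ℕ) * t * (n : ℝ≥0∞)⁻¹) ^ d +
      n * ((((1 + d * s) ^ (Fintype.card V) : ℕ) : ℝ≥0∞) * t * (n : ℝ≥0∞)⁻¹) ^ d := by
  classical
  have h0 := col_nonempty hn
  set E' := E.filter fun e => e ⊆ S with hE'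
  have hS' : ∀ v ∈ S, d ≤ (E'.filter fun e => v ∈ e).card := by
    intro v hv
    refine (hS v hv).trans (Finset.card_le_card ?_)
    intro e
    simp only [hE', Finset.mem_filter]
    tauto
  rw [probContains, dif_pos hn, prob_eq_Ex]
  have b1 := Ex_iter h0 St hitSet Set.univ (fun _ _ _ => trivial) 1 d
    (fun j _ h _ => hitSet_card_le j h) d le_rfl t
  have b2 := Ex_iter h0 St (fun j => Bad E' S (d - j)) (GoodH d) (GoodH_tail d)
    ((1 + d * s) ^ (Fintype.card V)) d (fun j hj h hh => by
      have := Bad_card_le E' S (k := d - (j + 1)) (by omega) hS' h hh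
      rwa [show d - (j + 1) + 1 = d - j by omega] at this) d le_rfl t
  refine le_trans ?_ (add_le_add b1 b2)
  rw [← Ex_add]
  refine Ex_mono h0 St t fun h => ?_
  by_cases hc : ContainsCopy E h
  · rw [Set.indicator_of_mem (by exact hc), Pi.one_apply, Set.indicator_univ]
    by_cases hg : h ∈ GoodH d
    · rw [Set.indicator_of_mem hg]
      refine le_trans ?_ le_add_self
      have := (Bad_zero_of_copy E S hSn h hc).card_pos
      rw [Nat.sub_self]
      exact_mod_cast this
    · refine le_trans ?_ le_self_add
      simp only [GoodH, Set.mem_ofPred_eq, not_forall, not_lt] at hg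
      obtain ⟨u, hu⟩ := hg
      have : 0 < (hitSet d h).card := Finset.card_pos.2 ⟨u, by simpa [hitSet] using hu⟩
      exact_mod_cast this
  · rw [Set.indicator_of_notMem (by exact hc)]
    exact zero_le

end Lower

end SemiRandomHypergraph
namespace SemiRandomHypergraph

lemma elog_coe (t : ℕ) : elog (t : ℕ∞) = ((Real.log t : ℝ) : EReal) := rfl

lemma elog_mono {a b : ℕ∞} (h : a ≤ b) : elog a ≤ elog b := by
  induction b using ENat.recTopCoe with
  | top => exact le_top
  | coe b =>
    induction a using ENat.recTopCoe with
    | top => simp at h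
    | coe a =>
      rw [elog_coe, elog_coe, EReal.coe_le_coe_iff]
      have hab : a ≤ b := by exact_mod_cast h
      rcases Nat.eq_zero_or_pos a with rfl | ha
      · simpa using Real.log_natCast_nonneg b
      · exact Real.log_le_log (by exact_mod_cast ha) (by exact_mod_cast hab)

lemma elog_nonneg (a : ℕ∞) : 0 ≤ elog a := by
  have h : ((0 : ℕ) : ℕ∞) ≤ a := by simp
  have := elog_mono h
  rw [elog_coe] at this
  simpa using this

lemma elog_zero_le (a : ℕ∞) (n : ℕ) : 0 ≤ elog a * (((Real.log n)⁻¹ : ℝ) : EReal) := by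
  apply mul_nonneg (elog_nonneg a)
  rw [EReal.coe_nonneg]
  exact inv_nonneg.2 (Real.log_natCast_nonneg n)

section
variable {V : Type*} [Fintype V] [DecidableEq V]

lemma lower_n {n s : ℕ} (hn : 1 ≤ n) (E : Finset (Finset V)) (S : Finset V) (hSn : S.Nonempty)
    {d : ℕ} (hd : 1 ≤ d)
    (hS : ∀ v ∈ S, d ≤ (E.filter fun e => v ∈ e ∧ e ⊆ S).card) :
    (((((d : ℝ) - 1) / d * Real.log n - (2 * Real.log 2 / d +
      Real.log ((1 + d * s) ^ (Fintype.card V) : ℕ)) : ℝ)) : EReal) ≤ elog (tauQ 1 s E 2⁻¹ n) := by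
  set M : ℕ := (1 + d * s) ^ (Fintype.card V) with hM
  have hM1 : 1 ≤ M := Nat.one_le_pow _ _ (by omega)
  set X : ℝ := ((d : ℝ) - 1) / d * Real.log n - (2 * Real.log 2 / d + Real.log (M : ℕ)) with hX
  have hN : ((⌈Real.exp X⌉₊ : ℕ) : ℕ∞) ≤ tauQ 1 s E 2⁻¹ n := by
    refine le_iInf fun St => le_sInf ?_
    rintro c ⟨t, rfl, ht⟩
    have h1 := ht.trans (prob_le hn E S hSn hS St t)
    have h2 : (2 : ℝ≥0∞)⁻¹ ≤ 2 * (n * ((M : ℝ≥0∞) * t * (n : ℝ≥0∞)⁻¹) ^ d) := by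
      refine h1.trans ?_
      rw [two_mul]
      gcongr
    have hn0 : (0 : ℝ) < n := by exact_mod_cast hn
    have hM0 : (0 : ℝ) < M := by exact_mod_cast hM1
    have hd0 : (0 : ℝ) < d := by exact_mod_cast hd
    have h3 : (2 : ℝ)⁻¹ ≤ 2 * (n * ((M : ℝ) * t * (n : ℝ)⁻¹) ^ d) := by
      have hfin : 2 * (n * ((M : ℝ≥0∞) * t * (n : ℝ≥0∞)⁻¹) ^ d) ≠ ⊤ := by
        have : (n : ℝ≥0∞)⁻¹ ≠ ⊤ := by
          simp; omega
        finiteness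
      have := ENNReal.toReal_mono hfin h2
      simpa using this
    have ht0 : t ≠ 0 := by
      rintro rfl
      norm_num at h3
      rw [zero_pow (by omega)] at h3
      norm_num at h3
    have ht1 : (0 : ℝ) < t := by exact_mod_cast Nat.pos_of_ne_zero ht0
    have h4 := Real.log_le_log (by norm_num) h3
    rw [Real.log_mul (by norm_num) (by positivity), Real.log_mul (by positivity) (by positivity),
      Real.log_pow, Real.log_mul (by positivity) (by positivity),
      Real.log_mul (by positivity) (by positivity), Real.log_inv, Real.log_inv] at h4
    have h5 : X ≤ Real.log t := by
      have : (d : ℝ) * X = ((d : ℝ) - 1) * Real.log n - (2 * Real.log 2 + d * Real.log M) := by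
        rw [hX]; field_simp
      nlinarith
    have h6 : Real.exp X ≤ t := by
      rw [← Real.exp_log ht1]; exact Real.exp_le_exp.2 h5
    exact_mod_cast Nat.ceil_le.2 h6
  refine le_trans ?_ (elog_mono hN)
  rw [elog_coe, EReal.coe_le_coe_iff]
  have := Real.log_le_log (Real.exp_pos X) (Nat.le_ceil (Real.exp X))
  rwa [Real.log_exp] at this

lemma lower_bound (s : ℕ) (E : Finset (Finset V)) (d : ℕ) (hdeg : DegeneracyEq E d) :
    ((((d : ℝ) - 1) / d : ℝ) : EReal) ≤ tauExp 1 s E := by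
  have hq : (2⁻¹ : ℝ≥0∞) ∈ Set.Ioo (0 : ℝ≥0∞) 1 := by
    constructor <;> simp
  refine le_trans ?_ (le_iSup₂ (f := fun (q : ℝ≥0∞) (_ : q ∈ Set.Ioo (0 : ℝ≥0∞) 1) =>
    Filter.limsup
      (fun n : ℕ => elog (tauQ 1 s E q n) * (((Real.log n)⁻¹ : ℝ) : EReal)) atTop) 2⁻¹ hq)
  rcases Nat.eq_zero_or_pos d with rfl | hd
  · simp only [Nat.cast_zero, div_zero, EReal.coe_zero]
    refine le_trans ?_ (Filter.limsup_le_limsup (Eventually.of_forall fun n => elog_zero_le _ n))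
    simp
  · have hnd : ¬ Degen E (d - 1) := fun h => by
      have := hdeg.2 _ h; omega
    simp only [Degen] at hnd
    push Not at hnd
    obtain ⟨S, hSn, hS⟩ := hnd
    have hS' : ∀ v ∈ S, d ≤ (E.filter fun e => v ∈ e ∧ e ⊆ S).card := fun v hv => by
      have := hS v hv; omega
    set a : ℝ := ((d : ℝ) - 1) / d
    set C : ℝ := (2 * Real.log 2 / d + Real.log ((1 + d * s) ^ (Fintype.card V) : ℕ)) with hC
    have hlog : Tendsto (fun n : ℕ => Real.log n) atTop atTop :=
      Real.tendsto_log_atTop.comp tendsto_natCast_atTop_atTop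
    have hlim : Tendsto (fun n : ℕ => ((a - C * (Real.log n)⁻¹ : ℝ) : EReal)) atTop
        (nhds (a : EReal)) := by
      rw [EReal.tendsto_coe]
      have := (hlog.inv_tendsto_atTop.const_mul C).const_sub a
      simpa using this
    rw [← hlim.limsup_eq]
    refine Filter.limsup_le_limsup ?_
    filter_upwards [eventually_ge_atTop 1, hlog.eventually_gt_atTop 0] with n hn hln
    have h1 := lower_n (s := s) hn E S hSn hd hS'
    have h2 : (a - C * (Real.log n)⁻¹ : ℝ) = (a * Real.log n - C) * (Real.log n)⁻¹ := by
      field_simp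
    rw [h2, EReal.coe_mul]
    refine mul_le_mul_of_nonneg_right h1 ?_
    rw [EReal.coe_nonneg]
    positivity

lemma num_eventually (d m : ℕ) (ε : ℝ) (hε : 0 < ε) (η : ℝ) (hη : 0 < η) :
    ∀ᶠ n : ℕ in atTop, Num n ⌈(n : ℝ) ^ (((d : ℝ) - 1) / d + ε)⌉₊ (ENNReal.ofReal η)
      (fun j => (n : ℝ) ^ (1 - (j : ℝ) / d) / 2) d m := by
  have hcast : Tendsto (fun n : ℕ => (n : ℝ)) atTop atTop := tendsto_natCast_atTop_atTop
  have hpow : Tendsto (fun n : ℕ => (n : ℝ) ^ ε) atTop atTop :=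
    (tendsto_rpow_atTop hε).comp hcast
  have hpow' : ∀ᶠ n : ℕ in atTop, 0 < d → (2 : ℝ) ≤ (n : ℝ) ^ (1 / (d : ℝ)) := by
    rcases Nat.eq_zero_or_pos d with rfl | hd
    · simp
    · filter_upwards [((tendsto_rpow_atTop (y := 1 / (d : ℝ)) (by positivity)).comp
        hcast).eventually_ge_atTop 2] with n hn _
      exact hn
  filter_upwards [eventually_ge_atTop (2 * m), eventually_ge_atTop 1, hpow',
    hpow.eventually_ge_atTop (4 * (1 + 2 * |Real.log η|))] with n hn1 hn2 hn3 hn4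
  have hn0 : (0 : ℝ) < n := by exact_mod_cast hn2
  have hn1' : (1 : ℝ) ≤ n := by exact_mod_cast hn2
  have hfacts : ∀ j < d, (n : ℝ) ^ (1 - (j : ℝ) / d) ≤ n ∧
      1 ≤ (n : ℝ) ^ (1 - ((j + 1 : ℕ) : ℝ) / d) ∧
      (n : ℝ) ^ (1 - (j : ℝ) / d) = (n : ℝ) ^ (1 - ((j + 1 : ℕ) : ℝ) / d) * (n : ℝ) ^ (1 / (d : ℝ)) := by
    intro j hj
    have hd0 : (0 : ℝ) < d := by exact_mod_cast (by omega : 0 < d)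
    refine ⟨?_, ?_, ?_⟩
    · calc _ ≤ (n : ℝ) ^ (1 : ℝ) := by
            apply Real.rpow_le_rpow_of_exponent_le hn1'
            have : (0 : ℝ) ≤ j / d := by positivity
            linarith
        _ = n := Real.rpow_one _
    · apply Real.one_le_rpow hn1'
      have : ((j + 1 : ℕ) : ℝ) / d ≤ 1 := by
        rw [div_le_one hd0]; exact_mod_cast hj
      linarith
    · rw [← Real.rpow_add hn0]
      congr 1
      push_cast
      field_simp
      ring
  refine ⟨?_, ?_, ?_, ?_⟩
  · simp
    have : (2 * m : ℝ) ≤ n := by exact_mod_cast hn1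
    linarith
  · intro j _
    positivity
  · intro j hj
    obtain ⟨f1, f2, f3⟩ := hfacts j hj
    rw [sub_nonneg, div_le_one (by positivity)]
    linarith
  · intro j hj
    obtain ⟨f1, f2, f3⟩ := hfacts j hj
    have hd0 : (0 : ℝ) < d := by exact_mod_cast (by omega : 0 < d)
    have hy := hn3 (by omega)
    set y := (n : ℝ) ^ (1 / (d : ℝ))
    set B := (n : ℝ) ^ (1 - (j : ℝ) / d)
    set B' := (n : ℝ) ^ (1 - ((j + 1 : ℕ) : ℝ) / d)
    set T : ℕ := ⌈(n : ℝ) ^ (((d : ℝ) - 1) / d + ε)⌉₊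
    have hT : (n : ℝ) / y * (n : ℝ) ^ ε ≤ T := by
      refine le_trans (le_of_eq ?_) (Nat.le_ceil _)
      rw [Real.rpow_add hn0]
      congr 1
      rw [show ((d : ℝ) - 1) / d = 1 - 1 / d by field_simp, Real.rpow_sub hn0, Real.rpow_one]
    apply ENNReal.ofReal_le_ofReal
    have hx0 : 0 ≤ 1 - (B / 2 - B' / 2) / (2 * n) := by
      rw [sub_nonneg, div_le_one (by positivity)]
      linarith
    have e1 : (1 - (B / 2 - B' / 2) / (2 * n)) ^ T ≤
        Real.exp (-((B / 2 - B' / 2) / (2 * n)) * T) := by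
      calc _ ≤ (Real.exp (-((B / 2 - B' / 2) / (2 * n)))) ^ T := by
            gcongr
            have := Real.add_one_le_exp (-((B / 2 - B' / 2) / (2 * n)))
            linarith
        _ = _ := by rw [← Real.exp_nat_mul, mul_comm]
    have e2 : (2 : ℝ) ^ (B' / 2) ≤ Real.exp (B' / 2) := by
      rw [Real.exp_eq_exp_ℝ, ← Real.exp_eq_exp_ℝ, ← Real.exp_one_rpow]
      apply Real.rpow_le_rpow (by norm_num) _ (by positivity)
      have := Real.add_one_le_exp (1 : ℝ)
      linarith
    have hy0 : 0 < y := by linarith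
    have e3 : B' / 8 * (n : ℝ) ^ ε ≤ (B / 2 - B' / 2) / (2 * n) * T := by
      calc B' / 8 * (n : ℝ) ^ ε = (B / 4) / (2 * n) * ((n : ℝ) / y * (n : ℝ) ^ ε) := by
            rw [f3]; field_simp; norm_num
        _ ≤ (B / 2 - B' / 2) / (2 * n) * T := by
            gcongr
            · have : B' * 2 ≤ B := by rw [f3]; gcongr
              have : 0 ≤ B / 2 - B' / 2 := by linarith
              positivity
            · have : B' * 2 ≤ B := by rw [f3]; gcongr
              linarith
    calc _ ≤ Real.exp (-((B / 2 - B' / 2) / (2 * n)) * T) * Real.exp (B' / 2) := by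
          gcongr
      _ = Real.exp (B' / 2 - ((B / 2 - B' / 2) / (2 * n)) * T) := by
          rw [← Real.exp_add]; congr 1; ring
      _ ≤ Real.exp (Real.log η) := by
          apply Real.exp_le_exp.2
          have g1 : B' / 8 * (4 * (1 + 2 * |Real.log η|)) ≤ B' / 8 * (n : ℝ) ^ ε := by gcongr
          have g2 : |Real.log η| ≤ B' * |Real.log η| := le_mul_of_one_le_left (abs_nonneg _) f2
          have g3 := neg_abs_le (Real.log η)
          nlinarith
      _ = η := Real.exp_log hη

lemma upper_bound (s : ℕ) (hs : 2 ≤ s) (E : Finset (Finset V)) (hunif : ∀ e ∈ E, e.card = s)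
    (d : ℕ) (hd : Degen E d) :
    tauExp 1 s E ≤ ((((d : ℝ) - 1) / d : ℝ) : EReal) := by
  refine iSup₂_le fun q hq => ?_
  set a : ℝ := ((d : ℝ) - 1) / d with ha
  have ha0 : 0 ≤ a := by
    rcases Nat.eq_zero_or_pos d with rfl | h
    · simp [ha]
    · have : (1 : ℝ) ≤ d := by exact_mod_cast h
      apply div_nonneg <;> linarith
  rw [← EReal.le_of_forall_lt_iff_le]
  intro z hz
  have hz' : a < z := by exact_mod_cast hz
  set ε : ℝ := (z - a) / 2 with hεd
  have hε : 0 < ε := by rw [hεd]; linarith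
  obtain ⟨η, hη, hηq⟩ : ∃ η : ℝ, 0 < η ∧ q + E.card * ENNReal.ofReal η ≤ 1 := by
    have hq1 : 0 < (1 - q).toReal := by
      rw [ENNReal.toReal_pos_iff]
      exact ⟨tsub_pos_of_lt hq.2, tsub_le_self.trans_lt (by simp)⟩
    refine ⟨(1 - q).toReal / (E.card + 1), by positivity, ?_⟩
    calc q + E.card * ENNReal.ofReal ((1 - q).toReal / (E.card + 1)) ≤ q + (1 - q) := by
          gcongr
          rw [← ENNReal.ofReal_natCast, ← ENNReal.ofReal_mul (by positivity)]
          refine (ENNReal.ofReal_le_ofReal (q := (1 - q).toReal) ?_).trans ENNReal.ofReal_toReal_le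
          rw [mul_div_assoc', div_le_iff₀ (by positivity)]
          nlinarith
      _ = 1 := add_tsub_cancel_of_le hq.2.le
  refine Filter.limsup_le_of_le (h := ?_)
  have hcast : Tendsto (fun n : ℕ => (n : ℝ)) atTop atTop := tendsto_natCast_atTop_atTop
  have hpow : Tendsto (fun n : ℕ => (n : ℝ) ^ ε) atTop atTop :=
    (tendsto_rpow_atTop hε).comp hcast
  filter_upwards [num_eventually d (Fintype.card V) ε hε η hη, eventually_ge_atTop 2,
    eventually_ge_atTop s, eventually_ge_atTop (Fintype.card V),
    hpow.eventually_ge_atTop (2 * E.card)] with n hnum hn2 hns hnV hnE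
  have h1 := tauQ_le (by omega) (by omega) (by omega) hnV E hunif hnum hd q hηq (by simp)
  have hn1' : (1 : ℝ) ≤ n := by exact_mod_cast (by omega : 1 ≤ n)
  have hn0 : (0 : ℝ) < n := by linarith
  have hln : 0 < Real.log n := Real.log_pos (by exact_mod_cast (by omega : 1 < n))
  set T : ℕ := ⌈(n : ℝ) ^ (a + ε)⌉₊ with hT
  have h2 : ((E.card * T : ℕ) : ℝ) ≤ (n : ℝ) ^ z := by
    have t1 : (1 : ℝ) ≤ (n : ℝ) ^ (a + ε) := Real.one_le_rpow hn1' (by linarith)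
    have t2 : (T : ℝ) ≤ 2 * (n : ℝ) ^ (a + ε) := by
      have := (Nat.ceil_lt_add_one (a := (n : ℝ) ^ (a + ε)) (by positivity)).le
      linarith
    have t3 : (n : ℝ) ^ z = (n : ℝ) ^ ε * (n : ℝ) ^ (a + ε) := by
      rw [← Real.rpow_add hn0]; congr 1; rw [hεd]; ring
    rw [t3]
    push_cast
    calc (E.card : ℝ) * T ≤ E.card * (2 * (n : ℝ) ^ (a + ε)) := by gcongr
      _ = (2 * E.card) * (n : ℝ) ^ (a + ε) := by ring
      _ ≤ _ := by gcongr
  have h3 : Real.log ((E.card * T : ℕ) : ℝ) ≤ z * Real.log n := by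
    rcases Nat.eq_zero_or_pos (E.card * T) with h0 | h0
    · rw [h0]; simp
      exact mul_nonneg (by linarith) hln.le
    · rw [← Real.log_rpow hn0]
      exact Real.log_le_log (by exact_mod_cast h0) h2
  calc _ ≤ ((Real.log ((E.card * T : ℕ) : ℝ) : ℝ) : EReal) * (((Real.log n)⁻¹ : ℝ) : EReal) := by
        refine mul_le_mul_of_nonneg_right (elog_mono h1) ?_
        rw [EReal.coe_nonneg]; positivity
    _ = ((Real.log ((E.card * T : ℕ) : ℝ) * (Real.log n)⁻¹ : ℝ) : EReal) := by
        rw [EReal.coe_mul]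
    _ ≤ _ := by
        rw [EReal.coe_le_coe_iff]
        rw [← div_eq_mul_inv, div_le_iff₀ hln]
        exact h3

end

end SemiRandomHypergraph

open SemiRandomHypergraph in
/-- **Corollary 5.** Let `r = 1`, `s ≥ 2` and let `G` be a fixed `s`-uniform hypergraph
of degeneracy `d`. Then `τ^{(1)}_{P_G} = (d-1)/d`. -/
theorem semiRandom_hypergraph_r_eq_one_threshold
    {V : Type*} [Fintype V] [DecidableEq V] (s : ℕ) (hs : 2 ≤ s)
    (E : Finset (Finset V)) (hunif : ∀ e ∈ E, e.card = s)
    (d : ℕ) (hdeg : DegeneracyEq E d) :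
    tauExp 1 s E = ((((d : ℝ) - 1) / d : ℝ) : EReal) := by
  exact le_antisymm (upper_bound s hs E hunif d hdeg.1) (lower_bound s E d hdeg)
end

section
/- Let k ≥ s ≥ r ≥ 2 be integers and let G be an s-uniform hypergraph on k vertices. Define μ_G^{(r,s)} = max over sub-hypergraphs G′ ⊆ G with |V(G′)| ≥ s of |E(G′)| / (|V(G′)| − s + r). Then τ^{(r)}_{P_G} ≥ r − 1/μ_G^{(r,s)}. -/
open Filter
open scoped ENNReal

namespace SRH
open SemiRandomHypergraph

noncomputable def Ex {α : Type*} (P : PMF α) (f : α → ℝ≥0∞) : ℝ≥0∞ := ∑' a, P a * f a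

lemma Ex_pure {α : Type*} (a : α) (f : α → ℝ≥0∞) : Ex (PMF.pure a) f = f a := by
  unfold Ex
  rw [tsum_eq_single a]
  · simp
  · intro b hb
    simp [PMF.pure_apply, hb]

lemma Ex_bind {α β : Type*} (P : PMF α) (g : α → PMF β) (f : β → ℝ≥0∞) :
    Ex (P.bind g) f = Ex P (fun a => Ex (g a) f) := by
  unfold Ex
  simp only [PMF.bind_apply, ← ENNReal.tsum_mul_right, ← ENNReal.tsum_mul_left]
  rw [ENNReal.tsum_comm]
  simp only [mul_assoc]

lemma Ex_map {α β : Type*} (P : PMF α) (g : α → β) (f : β → ℝ≥0∞) :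
    Ex (P.map g) f = Ex P (fun a => f (g a)) := by
  rw [← PMF.bind_pure_comp, Ex_bind]
  simp [Ex_pure]

lemma Ex_mono {α : Type*} (P : PMF α) {f g : α → ℝ≥0∞} (h : ∀ a, f a ≤ g a) :
    Ex P f ≤ Ex P g :=
  ENNReal.tsum_le_tsum fun a => mul_le_mul_right (h a) _

lemma Ex_const {α : Type*} (P : PMF α) (c : ℝ≥0∞) : Ex P (fun _ => c) = c := by
  unfold Ex
  rw [ENNReal.tsum_mul_right, P.tsum_coe, one_mul]

lemma Ex_add {α : Type*} (P : PMF α) (f g : α → ℝ≥0∞) :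
    Ex P (fun a => f a + g a) = Ex P f + Ex P g := by
  unfold Ex
  rw [← ENNReal.tsum_add]
  simp only [mul_add]

lemma Ex_mul_left {α : Type*} (P : PMF α) (c : ℝ≥0∞) (f : α → ℝ≥0∞) :
    Ex P (fun a => c * f a) = c * Ex P f := by
  unfold Ex
  rw [← ENNReal.tsum_mul_left]
  congr 1; ext a; ring

lemma Ex_sum {α ι : Type*} (P : PMF α) (s : Finset ι) (f : ι → α → ℝ≥0∞) :
    Ex P (fun a => ∑ i ∈ s, f i a) = ∑ i ∈ s, Ex P (f i) := by
  classical
  induction s using Finset.induction_on with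
  | empty => simp [Ex]
  | insert i s hi ih => simp only [Finset.sum_insert hi, Ex_add, ih]

lemma prob_le_Ex {α : Type*} (P : PMF α) (s : Set α) (f : α → ℝ≥0∞)
    (h : ∀ a ∈ s, 1 ≤ f a) : P.toOuterMeasure s ≤ Ex P f := by
  rw [PMF.toOuterMeasure_apply]
  refine ENNReal.tsum_le_tsum fun a => ?_
  by_cases ha : a ∈ s
  · simp only [Set.indicator_of_mem ha]
    calc P a = P a * 1 := by simp
      _ ≤ _ := mul_le_mul_right (h a ha) _
  · simp [ha]

section main
set_option linter.unusedSectionVars false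
variable {W : Type*} [Fintype W] [DecidableEq W] {n r s : ℕ}

def hit (φ : W ↪ Fin n) (p : Step n r s) (e : Finset W) : Prop :=
  Multiset.map (φ : W → Fin n) e.val = p.1.1.val + p.2.1.val

noncomputable instance (φ : W ↪ Fin n) (p : Step n r s) (e : Finset W) :
    Decidable (hit φ p e) := Classical.dec _

noncomputable def hitN (φ : W ↪ Fin n) (p : Step n r s) (e : Finset W) : ℝ≥0∞ :=
  if hit φ p e then 1 else 0

noncomputable def X (φ : W ↪ Fin n) (e : Finset W) (h : List (Step n r s)) : ℝ≥0∞ :=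
  (h.map fun p => hitN φ p e).sum

lemma X_cons (φ : W ↪ Fin n) (e : Finset W) (p : Step n r s) (h : List (Step n r s)) :
    X φ e (p :: h) = hitN φ p e + X φ e h := by simp [X]

lemma hit_unique (φ : W ↪ Fin n) (p : Step n r s) {e e' : Finset W}
    (h : hit φ p e) (h' : hit φ p e') : e = e' := by
  unfold hit at *
  exact Finset.val_injective (Multiset.map_injective φ.injective (h.trans h'.symm))

lemma one_le_X (φ : W ↪ Fin n) (e : Finset W) (h : List (Step n r s))
    (hh : ∃ p ∈ h, hit φ p e) : 1 ≤ X φ e h := by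
  obtain ⟨p, hp, hit⟩ := hh
  have : hitN φ p e ≤ X φ e h := by
    unfold X
    exact List.single_le_sum (by simp) _ (List.mem_map_of_mem hp)
  simpa [hitN, hit] using this

lemma prod_step (φ : W ↪ Fin n) (A : Finset (Finset W)) (p : Step n r s)
    (h : List (Step n r s)) :
    ∏ e ∈ A, X φ e (p :: h) =
      ∏ e ∈ A, X φ e h + ∑ e ∈ A, (∏ e' ∈ A.erase e, X φ e' h) * hitN φ p e := by
  by_cases hA : ∃ e ∈ A, hit φ p e
  · obtain ⟨e, he, hhit⟩ := hA
    have hne : ∀ e' ∈ A, e' ≠ e → hitN φ p e' = 0 := by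
      intro e' _ hne
      have : ¬ hit φ p e' := fun h' => hne (hit_unique φ p h' hhit)
      simp [hitN, this]
    have h1 : hitN φ p e = 1 := by simp [hitN, hhit]
    rw [Finset.sum_eq_single e (fun e' h1 h2 => by simp [hne e' h1 h2]) (by simp [he]),
      ← Finset.mul_prod_erase A _ he, ← Finset.mul_prod_erase A _ he, X_cons, h1]
    rw [Finset.prod_congr rfl (g := fun e' => X φ e' h)]
    · ring
    · intro e' he'
      rw [X_cons, hne e' (Finset.mem_of_mem_erase he') (Finset.ne_of_mem_erase he'), zero_add]
  · push Not at hA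
    have h0 : ∀ e ∈ A, hitN φ p e = 0 := fun e he => by simp [hitN, hA e he]
    rw [Finset.sum_eq_zero (fun e he => by rw [h0 e he, mul_zero]), add_zero]
    exact Finset.prod_congr rfl fun e he => by rw [X_cons, h0 e he, zero_add]

noncomputable def Y (A : Finset (Finset W)) (h : List (Step n r s)) : ℝ≥0∞ :=
  ∑ φ : W ↪ Fin n, ∏ e ∈ A, X φ e h

lemma Y_step (A : Finset (Finset W)) (p : Step n r s) (h : List (Step n r s)) :
    Y A (p :: h) = Y A h +
      ∑ e ∈ A, ∑ φ : W ↪ Fin n, (∏ e' ∈ A.erase e, X φ e' h) * hitN φ p e := by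
  unfold Y
  rw [Finset.sum_comm, ← Finset.sum_add_distrib]
  exact Finset.sum_congr rfl fun φ _ => prod_step φ A p h

lemma sum_hit_le (e : Finset W) (he : e.card = s) (p : Step n r s) (hrs : r ≤ s) :
    ∑ φ : W ↪ Fin n, hitN φ p e ≤ ((s ^ s * n ^ (Fintype.card W - s) : ℕ) : ℝ≥0∞) := by
  classical
  unfold hitN
  rw [Finset.sum_boole]
  norm_cast
  rw [← Fintype.card_subtype]
  let T : Finset (Fin n) := p.1.1 ∪ p.2.1
  have hT : T.card ≤ s := by
    refine (Finset.card_union_le _ _).trans ?_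
    rw [p.1.2, p.2.2]; omega
  have hmem : ∀ φ : W ↪ Fin n, hit φ p e → ∀ x ∈ e, φ x ∈ T := by
    intro φ hφ x hx
    have : φ x ∈ Multiset.map (φ : W → Fin n) e.val := Multiset.mem_map_of_mem _ hx
    rw [hφ] at this
    simpa [T] using this
  let F : {φ : W ↪ Fin n // hit φ p e} →
      ({x // x ∈ e} → {y // y ∈ T}) × ({x // ¬ x ∈ e} → Fin n) :=
    fun φ => (fun x => ⟨φ.1 x, hmem φ.1 φ.2 x x.2⟩, fun x => φ.1 x)
  have hF : Function.Injective F := by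
    intro φ ψ hh
    ext x
    by_cases hx : x ∈ e
    · have := congrFun (congrArg Prod.fst hh) ⟨x, hx⟩
      simpa [F, Fin.ext_iff] using this
    · have := congrFun (congrArg Prod.snd hh) ⟨x, hx⟩
      simpa [F, Fin.ext_iff] using this
  refine (Fintype.card_le_of_injective F hF).trans ?_
  have hc : Fintype.card {x // ¬ x ∈ e} = Fintype.card W - s := by
    rw [Fintype.card_subtype_compl]; simp [he]
  rw [Fintype.card_prod, Fintype.card_fun, Fintype.card_fun, hc, Fintype.card_fin]
  simp only [Fintype.card_coe, he]
  gcongr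

noncomputable def pp (n r s : ℕ) : ℝ≥0∞ := (s.choose r : ℝ≥0∞) / (n.choose r : ℝ≥0∞)

lemma Ex_hit_le (h : Nonempty (Col n r)) (T : Col n r → PMF (Col n (s - r)))
    (φ : W ↪ Fin n) (e : Finset W) (he : e.card = s) :
    Ex (@PMF.uniformOfFintype (Col n r) _ h) (fun U => Ex (T U) fun V => hitN φ (U, V) e)
      ≤ pp n r s := by
  classical
  have h1 : ∀ U : Col n r, (Ex (T U) fun V => hitN φ (U, V) e) ≤
      if U.1 ⊆ e.map φ then 1 else 0 := by
    intro U
    rw [← Ex_const (T U) (if U.1 ⊆ e.map φ then 1 else 0)]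
    refine Ex_mono _ fun V => ?_
    by_cases hh : hit φ (U, V) e
    · have : U.1 ⊆ e.map φ := by
        intro x hx
        have h2 : x ∈ U.1.val + V.1.val := by
          rw [Multiset.mem_add]; exact Or.inl hx
        unfold hit at hh
        simp only at hh
        rw [← hh] at h2
        exact h2
      simp [hitN, hh, this]
    · simp [hitN, hh]
  refine (Ex_mono _ h1).trans ?_
  unfold Ex
  rw [tsum_fintype]
  simp only [PMF.uniformOfFintype_apply]
  rw [← Finset.mul_sum, Finset.sum_boole, pp, div_eq_mul_inv, mul_comm]
  have hcard : Fintype.card (Col n r) = n.choose r := by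
    rw [Fintype.card_finset_len, Fintype.card_fin]
  rw [hcard]
  gcongr
  calc _ ≤ ((e.map φ).powersetCard r).card := by
        refine Finset.card_le_card_of_injOn (fun U => U.1) ?_ ?_
        · intro U hU
          simp only [Finset.coe_filter, Finset.mem_univ, true_and, Set.mem_ofPred_eq] at hU
          simp only [Finset.mem_coe, Finset.mem_powersetCard]
          exact ⟨hU, U.2⟩
        · intro a _ b _ hab
          exact Subtype.ext hab
    _ = _ := by rw [Finset.card_powersetCard, Finset.card_map, he]

lemma Ex_Y_le (hrs : r ≤ s) (h : Nonempty (Col n r)) (S : Strategy n r s) (t : ℕ) :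
    ∀ (j : ℕ) (A : Finset (Finset W)), A.card = j + 1 → (∀ e ∈ A, e.card = s) →
      Ex (historyPMF h S t) (Y A) ≤
        ((s ^ s * n ^ (Fintype.card W - s) : ℕ) : ℝ≥0∞) * pp n r s ^ j * (t : ℝ≥0∞) ^ (j + 1) := by
  set B : ℝ≥0∞ := ((s ^ s * n ^ (Fintype.card W - s) : ℕ) : ℝ≥0∞) with hB
  induction t with
  | zero =>
    intro j A hA hu
    have hne : A.Nonempty := Finset.card_pos.mp (by omega)
    obtain ⟨e, he⟩ := hne
    have : Y A ([] : List (Step n r s)) = 0 := by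
      unfold Y
      exact Finset.sum_eq_zero fun φ _ => Finset.prod_eq_zero he (by simp [X])
    rw [historyPMF, Ex_pure, this]
    exact zero_le
  | succ t ih =>
    intro j A hA hu
    have key : ∀ hist : List (Step n r s),
        Ex ((@PMF.uniformOfFintype (Col n r) _ h).bind fun U =>
          (S hist U).map fun W => (U, W) :: hist) (Y A) =
        Y A hist + ∑ e ∈ A, ∑ φ : W ↪ Fin n, (∏ e' ∈ A.erase e, X φ e' hist) *
          Ex (@PMF.uniformOfFintype (Col n r) _ h)
            (fun U => Ex (S hist U) fun V => hitN φ (U, V) e) := by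
      intro hist
      rw [Ex_bind]
      simp only [Ex_map, Y_step, Ex_add, Ex_const, Ex_sum, Ex_mul_left]
    rw [historyPMF, Ex_bind]
    simp only [key]
    rw [Ex_add]
    rcases j with _ | j
    · obtain ⟨e, rfl⟩ := Finset.card_eq_one.mp hA
      have he : e.card = s := hu e (by simp)
      have h2 : Ex (historyPMF h S t) (fun hist => ∑ e' ∈ ({e} : Finset (Finset W)),
          ∑ φ : W ↪ Fin n, (∏ e'' ∈ ({e} : Finset (Finset W)).erase e', X φ e'' hist) *
          Ex (@PMF.uniformOfFintype (Col n r) _ h)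
            (fun U => Ex (S hist U) fun V => hitN φ (U, V) e')) ≤ B := by
        rw [← Ex_const (historyPMF h S t) B]
        refine Ex_mono _ fun hist => ?_
        simp only [Finset.sum_singleton, Finset.erase_singleton, Finset.prod_empty, one_mul]
        rw [← Ex_sum]
        rw [← Ex_const (@PMF.uniformOfFintype (Col n r) _ h) B]
        refine Ex_mono _ fun U => ?_
        rw [← Ex_sum, ← Ex_const (S hist U) B]
        exact Ex_mono _ fun V => sum_hit_le e he (U, V) hrs
      refine (add_le_add (ih 0 {e} hA hu) h2).trans ?_
      simp only [pow_zero, mul_one, zero_add, pow_one]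
      push_cast
      rw [mul_add, mul_one]
    · have h2 : Ex (historyPMF h S t) (fun hist => ∑ e ∈ A,
          ∑ φ : W ↪ Fin n, (∏ e' ∈ A.erase e, X φ e' hist) *
          Ex (@PMF.uniformOfFintype (Col n r) _ h)
            (fun U => Ex (S hist U) fun V => hitN φ (U, V) e)) ≤
          ∑ e ∈ A, pp n r s * Ex (historyPMF h S t) (Y (A.erase e)) := by
        have h5 : ∀ e ∈ A, pp n r s * Ex (historyPMF h S t) (Y (A.erase e)) =
            Ex (historyPMF h S t) (fun hist => pp n r s * Y (A.erase e) hist) :=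
          fun e _ => (Ex_mul_left _ _ _).symm
        rw [Finset.sum_congr rfl h5, ← Ex_sum]
        refine Ex_mono _ fun hist => Finset.sum_le_sum fun e he => ?_
        rw [Y, Finset.mul_sum]
        refine Finset.sum_le_sum fun φ _ => ?_
        rw [mul_comm (pp n r s)]
        exact mul_le_mul_right (Ex_hit_le h _ φ e (hu e he)) _
      have h3 : ∑ e ∈ A, pp n r s * Ex (historyPMF h S t) (Y (A.erase e)) ≤
          ∑ e ∈ A, pp n r s * (B * pp n r s ^ j * (t : ℝ≥0∞) ^ (j + 1)) := by
        refine Finset.sum_le_sum fun e he => mul_le_mul_right (ih j (A.erase e) ?_ ?_) _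
        · rw [Finset.card_erase_of_mem he, hA]; rfl
        · exact fun e' he' => hu e' (Finset.mem_of_mem_erase he')
      refine (add_le_add (ih (j + 1) A hA hu) (h2.trans h3)).trans ?_
      rw [Finset.sum_const, hA, nsmul_eq_mul]
      have h4 : (t : ℝ≥0∞) ^ (j + 2) + ((j + 2 : ℕ) : ℝ≥0∞) * (t : ℝ≥0∞) ^ (j + 1) ≤
          ((t + 1 : ℕ) : ℝ≥0∞) ^ (j + 2) := by
        have : t ^ (j + 2) + (j + 2) * t ^ (j + 1) ≤ (t + 1) ^ (j + 2) := by
          have := pow_add_mul_le_add_pow (a := t) (b := 1) (by omega) (by omega) (j + 2)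
          simpa using this
        exact_mod_cast this
      calc _ = B * pp n r s ^ (j + 1) *
            ((t : ℝ≥0∞) ^ (j + 2) + ((j + 2 : ℕ) : ℝ≥0∞) * (t : ℝ≥0∞) ^ (j + 1)) := by ring
        _ ≤ _ := mul_le_mul_right h4 _

lemma one_le_Y (A : Finset (Finset W)) (h : List (Step n r s)) (hc : ContainsCopy A h) :
    1 ≤ Y A h := by
  obtain ⟨φ, hφ⟩ := hc
  have h1 : 1 ≤ ∏ e ∈ A, X φ e h := by
    calc (1 : ℝ≥0∞) = ∏ e ∈ A, 1 := by simp
      _ ≤ _ := Finset.prod_le_prod' fun e he => one_le_X φ e h (hφ e he)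
  refine h1.trans ?_
  exact Finset.single_le_sum (f := fun φ : W ↪ Fin n => ∏ e ∈ A, X φ e h)
    (fun _ _ => zero_le) (Finset.mem_univ φ)

end main

lemma copy_sub {V : Type*} [DecidableEq V] {n r s : ℕ} (E E' : Finset (Finset V)) (S : Finset V)
    (h1 : E' ⊆ E) (h2 : ∀ e ∈ E', e ⊆ S) (h : List (Step n r s)) (hc : ContainsCopy E h) :
    ContainsCopy (E'.image fun e => e.subtype (· ∈ S)) h := by
  obtain ⟨φ, hφ⟩ := hc
  refine ⟨(Function.Embedding.subtype _).trans φ, ?_⟩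
  intro e he
  obtain ⟨e', he', rfl⟩ := Finset.mem_image.mp he
  obtain ⟨p, hp, hh⟩ := hφ e' (h1 he')
  refine ⟨p, hp, ?_⟩
  rw [← hh]
  have h3 : (e'.subtype (· ∈ S)).map (Function.Embedding.subtype _) = e' := by
    rw [Finset.subtype_map]
    exact Finset.filter_true_of_mem (h2 e' he')
  conv_rhs => rw [← h3, Finset.map_val, Multiset.map_map]
  rfl

lemma prob_bound {V : Type*} [DecidableEq V] {n r s : ℕ} (hrs : r ≤ s)
    (E E' : Finset (Finset V)) (S : Finset V) (hunif : ∀ e ∈ E, e.card = s)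
    (h1 : E' ⊆ E) (h2 : ∀ e ∈ E', e ⊆ S) (j : ℕ) (hj : E'.card = j + 1)
    (T : Strategy n r s) (t : ℕ) :
    probContains n r s E T t ≤
      ((s ^ s * n ^ (S.card - s) : ℕ) : ℝ≥0∞) * pp n r s ^ j * (t : ℝ≥0∞) ^ (j + 1) := by
  unfold probContains
  split_ifs with h
  · have hmap : ∀ e ∈ E', (e.subtype (· ∈ S)).map (Function.Embedding.subtype _) = e := by
      intro e he
      rw [Finset.subtype_map]
      exact Finset.filter_true_of_mem (h2 e he)
    have hb := Ex_Y_le (W := {x // x ∈ S}) hrs (col_nonempty h) T t j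
      (E'.image fun e => e.subtype (· ∈ S)) (by
        rw [Finset.card_image_of_injOn, hj]
        intro a ha b hb hab
        simp only at hab
        rw [← hmap a ha, ← hmap b hb, hab]) (by
        intro e he
        obtain ⟨e', he', rfl⟩ := Finset.mem_image.mp he
        rw [← hunif e' (h1 he')]
        conv_rhs => rw [← hmap e' he', Finset.card_map])
    rw [Fintype.card_coe] at hb
    exact (prob_le_Ex _ _ _ fun a ha => one_le_Y _ a (copy_sub E E' S h1 h2 a ha)).trans hb
  · exact zero_le

/-- Upper bound for the hitting probability of an edge. -/
lemma pp_le {n r s : ℕ} (hn : 2 * r ≤ n) (hr : 1 ≤ r) :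
    pp n r s ≤ ENNReal.ofReal ((s.choose r * (r.factorial * 2 ^ r) : ℕ) * (n : ℝ) ^ (-(r : ℝ))) := by
  have hn0 : (0 : ℝ) < n := by exact_mod_cast (by omega : 0 < n)
  have hc : 0 < n.choose r := Nat.choose_pos (by omega)
  have : pp n r s = ENNReal.ofReal ((s.choose r : ℝ) / (n.choose r : ℝ)) := by
    rw [pp, ENNReal.ofReal_div_of_pos (by exact_mod_cast hc)]
    simp
  rw [this]
  apply ENNReal.ofReal_le_ofReal
  have h1 : ((n + 1 - r : ℕ) : ℝ) ^ r ≤ r.factorial * n.choose r := by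
    have := Nat.pow_le_choose (α := ℝ) r n
    rwa [div_le_iff₀ (by positivity), mul_comm] at this
  have h2 : (n : ℝ) / 2 ≤ ((n + 1 - r : ℕ) : ℝ) := by
    rw [div_le_iff₀ (by norm_num)]
    exact_mod_cast (by omega : n ≤ (n + 1 - r) * 2)
  have h3 : ((n : ℝ) / 2) ^ r ≤ r.factorial * n.choose r :=
    (pow_le_pow_left₀ (by positivity) h2 r).trans h1
  rw [div_pow, div_le_iff₀ (by positivity)] at h3
  rw [Real.rpow_neg hn0.le, Real.rpow_natCast, div_le_iff₀ (by exact_mod_cast hc)]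
  have h4 : (1 : ℝ) ≤ ((r.factorial * 2 ^ r : ℕ) : ℝ) * ((n : ℝ) ^ r)⁻¹ * n.choose r := by
    rw [mul_right_comm, ← div_eq_mul_inv, le_div_iff₀ (by positivity)]
    push_cast
    linarith
  calc (s.choose r : ℝ) = s.choose r * 1 := by ring
    _ ≤ s.choose r * (((r.factorial * 2 ^ r : ℕ) : ℝ) * ((n : ℝ) ^ r)⁻¹ * n.choose r) := by gcongr
    _ = _ := by push_cast; ring

end SRH

open SemiRandomHypergraph in
/-- **Corollary 7.** Let `k ≥ s ≥ r ≥ 2` and let `G` be an `s`-uniform hypergraph on `k`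
vertices (with at least one edge). With
`μ_G^{(r,s)} = max_{G' ⊆ G, |V(G')| ≥ s} |E(G')| / (|V(G')| - s + r)`, we have
`τ^{(r)}_{P_G} ≥ r - 1/μ_G^{(r,s)}`. -/
theorem semiRandom_hypergraph_density_lower_bound
    {V : Type*} [Fintype V] [DecidableEq V] (r s k : ℕ)
    (hr : 2 ≤ r) (hrs : r ≤ s) (hsk : s ≤ k)
    (E : Finset (Finset V)) (hunif : ∀ e ∈ E, e.card = s)
    (hk : Fintype.card V = k) (hE : E.Nonempty)
    (μ : ℝ)
    (hμ : μ = sSup {x : ℝ | ∃ (S : Finset V) (E' : Finset (Finset V)),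
      E' ⊆ E ∧ (∀ e ∈ E', e ⊆ S) ∧ s ≤ S.card ∧
      x = (E'.card : ℝ) / ((S.card : ℝ) - s + r)}) :
    ((((r : ℝ) - 1 / μ : ℝ)) : EReal) ≤ tauExp r s E := by
  obtain ⟨S, E', h1, h2, hS, hx⟩ : ∃ (S : Finset V) (E' : Finset (Finset V)),
      E' ⊆ E ∧ (∀ e ∈ E', e ⊆ S) ∧ s ≤ S.card ∧
      μ = (E'.card : ℝ) / ((S.card : ℝ) - s + r) := by
    set Z := {x : ℝ | ∃ (S : Finset V) (E' : Finset (Finset V)),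
      E' ⊆ E ∧ (∀ e ∈ E', e ⊆ S) ∧ s ≤ S.card ∧
      x = (E'.card : ℝ) / ((S.card : ℝ) - s + r)} with hZ
    have hfin : Z.Finite := by
      refine (Set.finite_range (fun q : Finset V × Finset (Finset V) =>
        (q.2.card : ℝ) / ((q.1.card : ℝ) - s + r))).subset ?_
      rintro x ⟨S, E', -, -, -, rfl⟩
      exact ⟨(S, E'), rfl⟩
    have hne : Z.Nonempty :=
      ⟨_, Finset.univ, ∅, by simp, by simp, by rw [Finset.card_univ, hk]; exact hsk, rfl⟩
    have := hne.csSup_mem hfin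
    rw [← hμ] at this
    exact this
  have hμpos : 0 < μ := by
    obtain ⟨e, he⟩ := hE
    have hfin : Set.Finite {x : ℝ | ∃ (S : Finset V) (E' : Finset (Finset V)),
      E' ⊆ E ∧ (∀ e ∈ E', e ⊆ S) ∧ s ≤ S.card ∧
      x = (E'.card : ℝ) / ((S.card : ℝ) - s + r)} := by
      refine (Set.finite_range (fun q : Finset V × Finset (Finset V) =>
        (q.2.card : ℝ) / ((q.1.card : ℝ) - s + r))).subset ?_
      rintro x ⟨S, E', -, -, -, rfl⟩
      exact ⟨(S, E'), rfl⟩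
    have hle : (1 : ℝ) / r ≤ μ := by
      rw [hμ]
      refine le_csSup hfin.bddAbove ⟨e, {e}, by simpa using he, by simp, (hunif e he).ge, ?_⟩
      rw [hunif e he]; simp
    have : (0 : ℝ) < 1 / r := by
      have : (0 : ℝ) < r := by exact_mod_cast (by omega : 0 < r)
      positivity
    linarith
  obtain ⟨j, hj⟩ : ∃ j, E'.card = j + 1 := by
    refine Nat.exists_eq_succ_of_ne_zero fun h0 => ?_
    rw [h0] at hx
    simp at hx
    linarith
  have hinv : 1 / μ = ((S.card : ℝ) - s + r) / (j + 1) := by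
    rw [hx, one_div_div, hj]; push_cast; rfl
  set α : ℝ := (r : ℝ) - 1 / μ with hα
  refine le_trans ?_ (le_iSup₂ (f := fun (q : ℝ≥0∞) (_ : q ∈ Set.Ioo (0 : ℝ≥0∞) 1) =>
    Filter.limsup (fun n : ℕ => elog (tauQ r s E q n) * (((Real.log n)⁻¹ : ℝ) : EReal)) atTop)
    (ENNReal.ofReal (1 / 2)) ⟨by simp, by
      rw [ENNReal.ofReal_lt_one]; norm_num⟩)
  refine le_of_forall_lt fun c' hc' => ?_
  obtain ⟨c, hcc, hcα⟩ := EReal.lt_iff_exists_real_btwn.mp hc'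
  refine hcc.trans_le ?_
  have hcα' : c < α := by exact_mod_cast hcα
  refine le_trans (Filter.le_liminf_of_le (by isBoundedDefault) ?_) (Filter.liminf_le_limsup)
  -- constants
  set C : ℝ := ((s.choose r * (r.factorial * 2 ^ r) : ℕ) : ℝ) with hC
  have hC0 : 0 ≤ C := by positivity
  set K : ℝ := (s : ℝ) ^ s * C ^ j with hK
  set δ : ℝ := (j + 1) * (α - c) with hδ
  have hδ0 : 0 < δ := mul_pos (by positivity) (by linarith)
  have hlim : Tendsto (fun n : ℕ => K * (n : ℝ) ^ (-δ)) atTop (nhds 0) := by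
    have := ((tendsto_rpow_neg_atTop hδ0).comp tendsto_natCast_atTop_atTop).const_mul K
    simpa using this
  have hev := hlim.eventually (gt_mem_nhds (show (0 : ℝ) < 1 / 2 by norm_num))
  filter_upwards [hev, eventually_ge_atTop (2 * r)] with n hn hnr
  have hn1 : (1 : ℝ) < n := by exact_mod_cast (by omega : 1 < n)
  have hn0 : (0 : ℝ) < n := by linarith
  have hlog : 0 < Real.log n := Real.log_pos hn1
  have key : ∀ (T : Strategy n r s) (t : ℕ),
      ENNReal.ofReal (1 / 2) ≤ probContains n r s E T t → (n : ℝ) ^ c ≤ t := by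
    intro T t ht
    by_contra! hlt
    have hb := ht.trans (SRH.prob_bound hrs E E' S hunif h1 h2 j hj T t)
    have hp := SRH.pp_le (s := s) hnr (by omega : 1 ≤ r)
    rw [← hC] at hp
    have h3 : ((s ^ s * n ^ (S.card - s) : ℕ) : ℝ≥0∞) * SRH.pp n r s ^ j * (t : ℝ≥0∞) ^ (j + 1) ≤
        ENNReal.ofReal (((s ^ s * n ^ (S.card - s) : ℕ) : ℝ) * (C * (n : ℝ) ^ (-(r : ℝ))) ^ j *
          ((n : ℝ) ^ c) ^ (j + 1)) := by
      rw [ENNReal.ofReal_mul (by positivity), ENNReal.ofReal_mul (by positivity),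
        ENNReal.ofReal_pow (by positivity), ENNReal.ofReal_pow (by positivity),
        ENNReal.ofReal_natCast]
      have ht' : (t : ℝ≥0∞) ≤ ENNReal.ofReal ((n : ℝ) ^ c) := by
        rw [← ENNReal.ofReal_natCast]
        exact ENNReal.ofReal_le_ofReal hlt.le
      gcongr
    have h4 := hb.trans h3
    rw [ENNReal.ofReal_le_ofReal_iff (by positivity)] at h4
    have h5 : ((s ^ s * n ^ (S.card - s) : ℕ) : ℝ) * (C * (n : ℝ) ^ (-(r : ℝ))) ^ j *
          ((n : ℝ) ^ c) ^ (j + 1) = K * (n : ℝ) ^ (-δ) := by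
      have e1 : -δ = ((S.card - s : ℕ) : ℝ) + (-(r : ℝ)) * (j : ℕ) + c * ((j + 1 : ℕ) : ℝ) := by
        rw [hδ, hα, hinv, Nat.cast_sub hS]
        push_cast
        field_simp
        ring
      rw [e1, Real.rpow_add hn0, Real.rpow_add hn0, Real.rpow_natCast,
        Real.rpow_mul hn0.le, Real.rpow_mul hn0.le, Real.rpow_natCast, Real.rpow_natCast, hK]
      push_cast
      ring
    linarith
  have htau : ∀ m : ℕ, tauQ r s E (ENNReal.ofReal (1 / 2)) n = (m : ℕ∞) → (n : ℝ) ^ c ≤ m := by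
    intro m hm
    have hle : ((⌈(n : ℝ) ^ c⌉₊ : ℕ) : ℕ∞) ≤ tauQ r s E (ENNReal.ofReal (1 / 2)) n := by
      unfold tauQ
      refine le_iInf fun T => le_sInf ?_
      rintro _ ⟨t, rfl, ht⟩
      exact_mod_cast Nat.ceil_le.mpr (key T t ht)
    rw [hm] at hle
    exact Nat.ceil_le.mp (by exact_mod_cast hle)
  induction hq : tauQ r s E (ENNReal.ofReal (1 / 2)) n using WithTop.recTopCoe with
  | top =>
    have h6 : elog ⊤ = ⊤ := rfl
    change _ ≤ elog (⊤ : ℕ∞) * _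
    rw [h6, EReal.top_mul_coe_of_pos (inv_pos.mpr hlog)]
    exact le_top
  | coe m =>
    have hm := htau m hq
    have h6 : elog ((m : ℕ) : ℕ∞) = ((Real.log m : ℝ) : EReal) := rfl
    change _ ≤ elog ((m : ℕ) : ℕ∞) * _
    rw [h6, ← EReal.coe_mul, EReal.coe_le_coe_iff, ← div_eq_mul_inv, le_div_iff₀ hlog,
      ← Real.log_rpow hn0]
    exact Real.log_le_log (Real.rpow_pos_of_pos hn0 c) hm
end
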